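/- arXiv:1304.5775 — 2 statements merged into one kernel-verified Lean document; each statement's English description precedes it below -/
import Mathlib

section
/- Let I be the radical bihomogeneous ideal of an (a,b)-grid Z of points in X = ℙ¹×ℙ¹, with a, b ≥ 1. Then for all m ≥ 1, α*(I^{(m)}) = max{a_m, b_m}, where (a_m, b_m) is the sequence associated to (a,b). -/
open MvPolynomial

noncomputable section

/-- The bi-graded polynomial ring `ℂ[x₀,x₁,y₀,y₁]`:
the first `Fin 2` summand indexes the variables `x₀,x₁`,
the second the variables `y₀,y₁`. -/
abbrev R4 : Type := MvPolynomial (Fin 2 ⊕ Fin 2) ℂ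

/-- The weight function giving the bi-grading of `R4`. -/
def biWeight : Fin 2 ⊕ Fin 2 → ℕ × ℕ := Sum.elim (fun _ => (1, 0)) (fun _ => (0, 1))

/-- `F` is a (possibly zero) form of bidegree `(p,q)`, i.e. homogeneous of degree `p`
in `x₀,x₁` and homogeneous of degree `q` in `y₀,y₁`. -/
def IsBiForm (F : R4) (p q : ℕ) : Prop :=
  IsWeightedHomogeneous biWeight F (p, q)

/-- The projective line `ℙ¹` over `ℂ`. -/
abbrev ProjLine := Projectivization ℂ (Fin 2 → ℂ)

/-- The bi-homogeneous prime ideal of a point `P = ([a:b],[c:d])` of `X = ℙ¹ × ℙ¹`,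
generated by `b·x₀ - a·x₁` and `d·y₀ - c·y₁`. -/
def pointIdeal (P : ProjLine × ProjLine) : Ideal R4 :=
  Ideal.span
    { C (P.1.rep 1) * X (Sum.inl 0) - C (P.1.rep 0) * X (Sum.inl 1),
      C (P.2.rep 1) * X (Sum.inr 0) - C (P.2.rep 0) * X (Sum.inr 1) }

/-- The `m`-th symbolic power of the radical ideal of the finite set of points `Z ⊂ X`:
`I^{(m)} = ⋂_{P ∈ Z} I(P)^m`.  For `m = 1` this is the radical ideal `I = I(Z)` itself. -/
def symbPow (Z : Finset (ProjLine × ProjLine)) (m : ℕ) : Ideal R4 :=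
  ⨅ P ∈ Z, pointIdeal P ^ m

/-- `α*(J)`: the least `t ≥ 0` such that `J` contains a nonzero form of bidegree `(t,t)`. -/
def alphaStar (J : Ideal R4) : ℕ :=
  sInf {t : ℕ | ∃ F ∈ J, F ≠ 0 ∧ IsBiForm F t t}

/-- `α⁺(J)`: the least `d ≥ 0` such that `J` contains a nonzero form of bidegree `(p,q)`
with `p + q = d`. -/
def alphaPlus (J : Ideal R4) : ℕ :=
  sInf {d : ℕ | ∃ p q : ℕ, p + q = d ∧ ∃ F ∈ J, F ≠ 0 ∧ IsBiForm F p q}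

/-- The sequence `(a_m, b_m)` associated to `(a,b)`: `(a₀,b₀) = (0,0)` and
`(a_m,b_m) = (a_{m-1}+a, b_{m-1})` if `a_{m-1}+a ≤ b_{m-1}+b`, and
`(a_m,b_m) = (a_{m-1}, b_{m-1}+b)` otherwise. -/
def gridSeq (a b : ℕ) : ℕ → ℕ × ℕ
  | 0 => (0, 0)
  | m + 1 =>
      if (gridSeq a b m).1 + a ≤ (gridSeq a b m).2 + b then
        ((gridSeq a b m).1 + a, (gridSeq a b m).2)
      else
        ((gridSeq a b m).1, (gridSeq a b m).2 + b)

/-!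
Let `F` be a nonzero form of bidegree `(p, q)` in `I^(m)`, and let `P ∈ Z_V` be a point whose
vertical line `ℓ_P` has the smallest multiplicity `k` in `F`. The `k`-th power of every vertical
line through `Z_V` divides `F`, so `k * a ≤ p`. The cofactor of `ℓ_P ^ k` still vanishes to order
`m - k` at the `b` points of the grid on `ℓ_P` but does not contain `ℓ_P`, so restricting it to
`ℓ_P` gives `(m - k) * b ≤ q`. Conversely, if `i + j = m`, then the product of the `i`-th power of
all vertical lines and the `j`-th power of all horizontal lines lies in `I^(m)`. Hence `α*(I^(m))`
is the minimum of `max (i * a) (j * b)` over `i + j = m`, and `gridSeq a b` reaches it greedily: by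
always extending the coordinate which becomes the smaller one, it keeps both coordinates so close
that any other split of `m` has one coordinate at least as large as its maximum.
-/

section WeightedHomogeneous

variable {R σ τ M : Type*} [CommSemiring R]

lemma exists_isWeightedHomogeneous_of_mul [NoZeroDivisors R] [AddCancelCommMonoid M]
    {w : σ → M} {f g : MvPolynomial σ R} {m n : M} (hf : IsWeightedHomogeneous w f m)
    (hfg : IsWeightedHomogeneous w (f * g) n) (hf0 : f ≠ 0) (hg0 : g ≠ 0) :
    ∃ k, m + k = n ∧ IsWeightedHomogeneous w g k := by
  classical
  let _ := weightedGradedAlgebra R w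
  have component_mul (k : M) : weightedHomogeneousComponent w (m + k) (f * g) =
      f * weightedHomogeneousComponent w k g := by
    have := DirectSum.coe_decompose_mul_add_of_left_mem (weightedHomogeneousSubmodule R w)
      (j := k) (b := g) hf
    rwa [← weightedDecomposition.decompose'_apply, ← weightedDecomposition.decompose'_apply]
  have weight_eq {d : σ →₀ ℕ} (hd : coeff d g ≠ 0) : m + Finsupp.weight w d = n := by
    by_contra hne
    have hzero := component_mul (Finsupp.weight w d)
    rw [hfg.weightedHomogeneousComponent_ne _ hne, eq_comm, mul_eq_zero_iff_left hf0] at hzero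
    have := congrArg (coeff d) hzero
    rw [coeff_weightedHomogeneousComponent, if_pos rfl] at this
    exact hd this
  obtain ⟨d, hd⟩ := ne_zero_iff.1 hg0
  exact ⟨_, weight_eq hd,
    fun _ hd' => add_left_cancel ((weight_eq hd').trans (weight_eq hd).symm)⟩

lemma isWeightedHomogeneous_aeval [AddCommMonoid M] {w : σ → M} {w' : τ → M}
    {φ : σ → MvPolynomial τ R} (hφ : ∀ i, IsWeightedHomogeneous w' (φ i) (w i))
    {f : MvPolynomial σ R} {n : M} (hf : IsWeightedHomogeneous w f n) :
    IsWeightedHomogeneous w' (aeval φ f) n := by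
  rw [aeval_def, algebraMap_eq, eval₂_eq]
  refine IsWeightedHomogeneous.sum _ _ _ fun d hd => ?_
  have hdeg : ∑ i ∈ d.support, d i • w i = n :=
    (Finsupp.weight_apply w d).symm.trans (hf (mem_support_iff.1 hd))
  rw [← hdeg]
  exact (IsWeightedHomogeneous.prod d.support _ _ fun i _ => (hφ i).pow (d i)).C_mul _

lemma irreducible_of_isHomogeneous_one {K : Type*} [Field K] {f : MvPolynomial σ K}
    (hf : f.IsHomogeneous 1) (hf0 : f ≠ 0) : Irreducible f := by
  refine irreducible_of_totalDegree_eq_one (hf.totalDegree hf0) fun r hr => ?_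
  obtain ⟨d, hd⟩ := ne_zero_iff.1 hf0
  exact (ne_zero_of_dvd_ne_zero hd (hr d)).isUnit

end WeightedHomogeneous

section SpanPair

variable {R : Type*} [CommRing R] {x y g : R}

lemma span_pair_pow_succ_le (x y : R) (n : ℕ) :
    Ideal.span {x, y} ^ (n + 1) ≤
      Ideal.span {x} * Ideal.span {x, y} ^ n ⊔ Ideal.span {y ^ (n + 1)} := by
  induction n with
  | zero => simp [Ideal.span_insert]
  | succ n ih =>
    set I := Ideal.span {x, y} with hI
    have hy : Ideal.span {y} ≤ I := Ideal.span_mono (by simp)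
    calc I ^ (n + 1 + 1)
        = Ideal.span {x} * I ^ (n + 1) ⊔ Ideal.span {y} * I ^ (n + 1) := by
          rw [pow_succ' I, ← Ideal.sup_mul, hI, ← Ideal.span_insert]
      _ ≤ Ideal.span {x} * I ^ (n + 1) ⊔
            (Ideal.span {x} * (Ideal.span {y} * I ^ n) ⊔ Ideal.span {y ^ (n + 1 + 1)}) := by
          gcongr
          refine (Ideal.mul_mono_right ih).trans_eq ?_
          rw [Ideal.mul_sup, mul_left_comm, Ideal.span_singleton_mul_span_singleton, ← pow_succ']
      _ ≤ Ideal.span {x} * I ^ (n + 1) ⊔ Ideal.span {y ^ (n + 1 + 1)} := by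
          rw [← sup_assoc]
          gcongr
          exact sup_le le_rfl (Ideal.mul_mono_right (by rw [pow_succ']; gcongr))

variable [IsDomain R]

lemma mem_span_pair_pow_of_mul_mem (hx : Prime x) (hxy : ¬ x ∣ y) {n : ℕ}
    (h : x * g ∈ Ideal.span {x, y} ^ (n + 1)) : g ∈ Ideal.span {x, y} ^ n := by
  obtain ⟨_, hxf, _, hyr, hsum⟩ := Submodule.mem_sup.1 (span_pair_pow_succ_le x y n h)
  obtain ⟨f, hf, rfl⟩ := Ideal.mem_span_singleton_mul.1 hxf
  obtain ⟨r, rfl⟩ := Ideal.mem_span_singleton.1 hyr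
  have hxr : x ∣ y ^ (n + 1) * r := ⟨g - f, by linear_combination hsum⟩
  obtain ⟨r, rfl⟩ := (hx.dvd_or_dvd hxr).resolve_left fun hd => hxy (hx.dvd_of_dvd_pow hd)
  have hg : g = f + y ^ n * (y * r) := mul_left_cancel₀ hx.ne_zero (by linear_combination -hsum)
  rw [hg]
  exact add_mem hf (Ideal.mul_mem_right _ _ (Ideal.pow_mem_pow (Ideal.subset_span (by simp)) n))

lemma mem_span_pair_pow_sub_of_pow_mul_mem (hx : Prime x) (hxy : ¬ x ∣ y) {k n : ℕ}
    (h : x ^ k * g ∈ Ideal.span {x, y} ^ n) : g ∈ Ideal.span {x, y} ^ (n - k) := by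
  induction k generalizing n with
  | zero => simpa using h
  | succ k ih =>
    cases n with
    | zero => simp
    | succ n =>
      rw [pow_succ' x, mul_assoc] at h
      simpa using ih (mem_span_pair_pow_of_mul_mem hx hxy h)

end SpanPair

section LineForm

variable {K : Type*} [Field K] {σ : Type*}

/-- The linear form in the two variables `X (e 0)` and `X (e 1)` which vanishes at the point
`[v 0 : v 1]` of the projective line. With `e = Sum.inl` and `e = Sum.inr` these are the
equations of the vertical and horizontal rulings of `ℙ¹ × ℙ¹`. -/
def lineForm (e : Fin 2 → σ) (v : Fin 2 → K) : MvPolynomial σ K :=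
  C (v 1) * X (e 0) - C (v 0) * X (e 1)

variable {e : Fin 2 → σ} {v w : Fin 2 → K}

lemma isWeightedHomogeneous_lineForm {M : Type*} [AddCommMonoid M] {wt : σ → M} {n : M}
    (h : ∀ i, wt (e i) = n) (v : Fin 2 → K) : IsWeightedHomogeneous wt (lineForm e v) n := by
  have hX (i : Fin 2) : IsWeightedHomogeneous wt (X (e i) : MvPolynomial σ K) n :=
    h i ▸ isWeightedHomogeneous_X K wt (e i)
  exact ((hX 0).C_mul _).sub ((hX 1).C_mul _)

lemma eval_extend_lineForm (he : e.Injective) (v z : Fin 2 → K) :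
    eval (Function.extend e z 0) (lineForm e v) = v 1 * z 0 - v 0 * z 1 := by
  simp [lineForm, he.extend_apply]

lemma lineForm_ne_zero (he : e.Injective) (hv : v ≠ 0) : lineForm e v ≠ 0 := by
  intro h
  have hz (z : Fin 2 → K) : v 1 * z 0 - v 0 * z 1 = 0 := by
    rw [← eval_extend_lineForm he, h, map_zero]
  refine hv (funext (Fin.forall_fin_two.2 ⟨?_, ?_⟩))
  · simpa using hz ![0, 1]
  · simpa using hz ![1, 0]

lemma irreducible_lineForm (he : e.Injective) (hv : v ≠ 0) : Irreducible (lineForm e v) :=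
  irreducible_of_isHomogeneous_one
    (isWeightedHomogeneous_lineForm (e := e) (wt := 1) (fun _ => rfl) v) (lineForm_ne_zero he hv)

lemma prime_lineForm (he : e.Injective) (hv : v ≠ 0) : Prime (lineForm e v) :=
  (irreducible_lineForm he hv).prime

lemma isRelPrime_lineForm (he : e.Injective) (h : LinearIndependent K ![v, w]) :
    IsRelPrime (lineForm e v) (lineForm e w) := by
  have hv : v ≠ 0 := h.ne_zero 0
  refine (irreducible_lineForm he hv).isRelPrime_iff_not_dvd.2 fun hdvd => ?_
  have hdet : v 0 * w 1 - v 1 * w 0 ≠ 0 := by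
    rw [← Matrix.det_fin_two_of, ← isUnit_iff_ne_zero, ← Matrix.isUnit_iff_isUnit_det,
      ← Matrix.linearIndependent_rows_iff_isUnit]
    convert h using 1
    ext i j
    fin_cases i <;> fin_cases j <;> rfl
  have heval := map_dvd (eval (Function.extend e v 0)) hdvd
  rw [eval_extend_lineForm he, eval_extend_lineForm he, mul_comm (v 1), sub_self,
    zero_dvd_iff] at heval
  exact hdet (by linear_combination heval)

/-- The union of the lines `lineForm e P.rep` over `P ∈ Z`: for `e = Sum.inl` (`e = Sum.inr`) the
equation of all vertical (horizontal) rulings of `ℙ¹ × ℙ¹` through a point of `Z`. -/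
def rulingForm (e : Fin 2 → σ) (Z : Finset (Projectivization K (Fin 2 → K))) : MvPolynomial σ K :=
  ∏ P ∈ Z, lineForm e P.rep

lemma rulingForm_ne_zero (he : e.Injective) (Z : Finset (Projectivization K (Fin 2 → K))) :
    rulingForm e Z ≠ 0 :=
  Finset.prod_ne_zero_iff.2 fun P _ => lineForm_ne_zero he P.rep_nonzero

lemma isWeightedHomogeneous_rulingForm {M : Type*} [AddCommMonoid M] {wt : σ → M} {n : M}
    (h : ∀ i, wt (e i) = n) (Z : Finset (Projectivization K (Fin 2 → K))) :
    IsWeightedHomogeneous wt (rulingForm e Z) (Z.card • n) := by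
  rw [← Finset.sum_const]
  exact IsWeightedHomogeneous.prod Z _ _ fun P _ => isWeightedHomogeneous_lineForm h P.rep

lemma rulingForm_pow_dvd (he : e.Injective) {F : MvPolynomial σ K}
    {Z : Finset (Projectivization K (Fin 2 → K))} {k : ℕ}
    (hdvd : ∀ P ∈ Z, lineForm e P.rep ^ k ∣ F) : rulingForm e Z ^ k ∣ F := by
  rw [rulingForm, ← Finset.prod_pow]
  exact Finset.prod_dvd_of_isRelPrime (fun P _ Q _ hPQ => (isRelPrime_lineForm he
    (Projectivization.linearIndependent_pair_iff_ne.2 hPQ)).pow) hdvd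

lemma card_nsmul_le_of_pow_lineForm_dvd {M : Type*} [AddCancelCommMonoid M] [Preorder M]
    [CanonicallyOrderedAdd M] {wt : σ → M} {n N : M} (he : e.Injective)
    (hwt : ∀ i, wt (e i) = n) {F : MvPolynomial σ K} (hF : IsWeightedHomogeneous wt F N)
    (hF0 : F ≠ 0) {Z : Finset (Projectivization K (Fin 2 → K))} {k : ℕ}
    (hdvd : ∀ P ∈ Z, lineForm e P.rep ^ k ∣ F) : k • Z.card • n ≤ N := by
  obtain ⟨G, rfl⟩ := rulingForm_pow_dvd he hdvd
  obtain ⟨l, rfl, -⟩ := exists_isWeightedHomogeneous_of_mul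
    ((isWeightedHomogeneous_rulingForm hwt Z).pow k) hF
    (left_ne_zero_of_mul hF0) (right_ne_zero_of_mul hF0)
  exact le_self_add

end LineForm

section FiberRestrict

variable {K : Type*} [Field K] {τ : Type*} {u v : Fin 2 → K}

/-- Restriction to the fibre over `[v 0 : v 1]` of the first projection. Substituting
`xᵢ ↦ vᵢ · (u₀ x₀ + u₁ x₁)`, where `u ⬝ᵥ v = 1`, realizes the reduction modulo
`lineForm Sum.inl v` as an endomorphism, which unlike `xᵢ ↦ vᵢ` preserves the bidegree. -/
def fiberRestrict (u v : Fin 2 → K) :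
    MvPolynomial (Fin 2 ⊕ τ) K →ₐ[K] MvPolynomial (Fin 2 ⊕ τ) K :=
  aeval (Sum.elim (fun i => C (v i) * ∑ k, C (u k) * X (Sum.inl k)) (fun j => X (Sum.inr j)))

lemma fiberRestrict_lineForm_inl (u v : Fin 2 → K) :
    fiberRestrict (τ := τ) u v (lineForm Sum.inl v) = 0 := by
  simp only [fiberRestrict, lineForm, map_sub, map_mul, algHom_C, algebraMap_eq, aeval_X,
    Sum.elim_inl]
  ring

lemma fiberRestrict_lineForm_inr (u v w : Fin 2 → K) :
    fiberRestrict u v (lineForm (Sum.inr : Fin 2 → Fin 2 ⊕ Fin 2) w) = lineForm Sum.inr w := by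
  simp [fiberRestrict, lineForm]

lemma isWeightedHomogeneous_fiberRestrict {M : Type*} [AddCommMonoid M] {wt : Fin 2 ⊕ τ → M}
    {n N : M} (hwt : ∀ i, wt (Sum.inl i) = n) (u v : Fin 2 → K)
    {F : MvPolynomial (Fin 2 ⊕ τ) K} (hF : IsWeightedHomogeneous wt F N) :
    IsWeightedHomogeneous wt (fiberRestrict u v F) N := by
  have hX (i : Fin 2) : IsWeightedHomogeneous wt (X (Sum.inl i) : MvPolynomial (Fin 2 ⊕ τ) K) n :=
    hwt i ▸ isWeightedHomogeneous_X K wt _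
  refine isWeightedHomogeneous_aeval (Sum.rec (fun i => ?_) fun j => ?_) hF
  · rw [hwt i]
    exact (IsWeightedHomogeneous.sum _ _ _ fun k _ => (hX k).C_mul (u k)).C_mul (v i)
  · exact isWeightedHomogeneous_X K wt _

lemma lineForm_inl_dvd_sub_fiberRestrict (huv : u ⬝ᵥ v = 1) (F : MvPolynomial (Fin 2 ⊕ τ) K) :
    lineForm Sum.inl v ∣ F - fiberRestrict u v F := by
  set I := Ideal.span {lineForm (K := K) (Sum.inl : Fin 2 → Fin 2 ⊕ τ) v}
  suffices h : (Ideal.Quotient.mkₐ K I).comp (fiberRestrict u v) = Ideal.Quotient.mkₐ K I by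
    rw [← Ideal.mem_span_singleton, ← Ideal.Quotient.mk_eq_mk_iff_sub_mem]
    exact (DFunLike.congr_fun h F).symm
  have hC : (C (u 0) * C (v 0) + C (u 1) * C (v 1) : MvPolynomial (Fin 2 ⊕ τ) K) = 1 := by
    rw [← C_mul, ← C_mul, ← C_add, ← Matrix.vec2_dotProduct, huv, C_1]
  refine algHom_ext fun i => Ideal.Quotient.eq.2 (Ideal.mem_span_singleton.2 ?_)
  rcases i with i | j
  · rw [fiberRestrict, RingHom.coe_coe, aeval_X, Sum.elim_inl, Fin.sum_univ_two]
    fin_cases i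
    · exact ⟨-C (u 1), by simp only [lineForm, Fin.zero_eta]; linear_combination X (Sum.inl 0) * hC⟩
    · exact ⟨C (u 0), by simp only [lineForm, Fin.mk_one]; linear_combination X (Sum.inl 1) * hC⟩
  · simp [fiberRestrict]

lemma exists_dotProduct_eq_one (hv : v ≠ 0) : ∃ u : Fin 2 → K, u ⬝ᵥ v = 1 := by
  obtain ⟨i, hi⟩ := Function.ne_iff.1 hv
  exact ⟨Pi.single i (v i)⁻¹, by simpa using inv_mul_cancel₀ hi⟩

lemma not_lineForm_inl_dvd_lineForm_inr (v : Fin 2 → K) {w : Fin 2 → K} (hw : w ≠ 0) :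
    ¬ lineForm (Sum.inl : Fin 2 → Fin 2 ⊕ Fin 2) v ∣ lineForm Sum.inr w := by
  intro hdvd
  have := map_dvd (fiberRestrict 0 v) hdvd
  rw [fiberRestrict_lineForm_inl, fiberRestrict_lineForm_inr, zero_dvd_iff] at this
  exact lineForm_ne_zero Sum.inr_injective hw this

end FiberRestrict

section SymbolicPower

lemma biWeight_inl (i : Fin 2) : biWeight (Sum.inl i) = (1, 0) :=
  rfl

lemma biWeight_inr (j : Fin 2) : biWeight (Sum.inr j) = (0, 1) :=
  rfl

lemma pointIdeal_eq_span_lineForm (P : ProjLine × ProjLine) :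
    pointIdeal P = Ideal.span {lineForm Sum.inl P.1.rep, lineForm Sum.inr P.2.rep} :=
  rfl

lemma mem_symbPow {Z : Finset (ProjLine × ProjLine)} {m : ℕ} {F : R4} :
    F ∈ symbPow Z m ↔ ∀ P ∈ Z, F ∈ pointIdeal P ^ m := by
  simp only [symbPow, Ideal.mem_iInf]

lemma mem_pointIdeal_pow_sub_of_pow_mul_mem {P Q : ProjLine} {G : R4} {k m : ℕ}
    (h : lineForm Sum.inl P.rep ^ k * G ∈ pointIdeal (P, Q) ^ m) :
    G ∈ pointIdeal (P, Q) ^ (m - k) :=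
  mem_span_pair_pow_sub_of_pow_mul_mem (prime_lineForm Sum.inl_injective P.rep_nonzero)
    (not_lineForm_inl_dvd_lineForm_inr P.rep Q.rep_nonzero) h

lemma lineForm_pow_dvd_fiberRestrict {P Q : ProjLine} {G : R4} {m : ℕ} (u : Fin 2 → ℂ)
    (hG : G ∈ pointIdeal (P, Q) ^ m) :
    lineForm Sum.inr Q.rep ^ m ∣ fiberRestrict u P.rep G := by
  have h := Ideal.mem_map_of_mem (fiberRestrict u P.rep) hG
  rwa [Ideal.map_pow, pointIdeal_eq_span_lineForm, Ideal.map_span, Set.image_pair,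
    fiberRestrict_lineForm_inl, fiberRestrict_lineForm_inr, Ideal.span_insert_zero,
    Ideal.span_singleton_pow, Ideal.mem_span_singleton] at h

lemma mul_card_le_of_not_lineForm_dvd {P : ProjLine} {ZH : Finset ProjLine} {G : R4}
    {p q m : ℕ} (hB : IsBiForm G p q) (hP : ¬ lineForm Sum.inl P.rep ∣ G)
    (hG : ∀ Q ∈ ZH, G ∈ pointIdeal (P, Q) ^ m) : m * ZH.card ≤ q := by
  obtain ⟨u, hu⟩ := exists_dotProduct_eq_one P.rep_nonzero
  have hne : fiberRestrict u P.rep G ≠ 0 := fun h0 => hP (by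
    simpa [h0] using lineForm_inl_dvd_sub_fiberRestrict hu G)
  have hle := card_nsmul_le_of_pow_lineForm_dvd Sum.inr_injective biWeight_inr
    (isWeightedHomogeneous_fiberRestrict biWeight_inl u P.rep hB) hne
    fun Q hQ => lineForm_pow_dvd_fiberRestrict u (hG Q hQ)
  simpa using hle.2

theorem exists_card_le_of_mem_symbPow_product {ZV ZH : Finset ProjLine} {m p q : ℕ} {F : R4}
    (hF : F ∈ symbPow (ZV ×ˢ ZH) m) (hF0 : F ≠ 0) (hB : IsBiForm F p q) :
    ∃ i j, i + j = m ∧ i * ZV.card ≤ p ∧ j * ZH.card ≤ q := by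
  obtain rfl | hV := ZV.eq_empty_or_nonempty
  · exact ⟨m, 0, by simp⟩
  obtain ⟨P, hP, hmin⟩ :=
    ZV.exists_min_image (fun P => multiplicity (lineForm Sum.inl P.rep) F) hV
  set k := multiplicity (lineForm Sum.inl P.rep) F
  have hp : k * ZV.card ≤ p := by
    have hle := card_nsmul_le_of_pow_lineForm_dvd Sum.inl_injective biWeight_inl hB hF0
      fun P' hP' => pow_dvd_of_le_multiplicity (hmin P' hP')
    simpa using hle.1
  have hfin : FiniteMultiplicity (lineForm Sum.inl P.rep) F := FiniteMultiplicity.of_prime_left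
    (prime_lineForm Sum.inl_injective P.rep_nonzero) hF0
  obtain ⟨G, hFG, hPG⟩ := hfin.exists_eq_pow_mul_and_not_dvd
  rw [hFG] at hF hF0 hB
  obtain ⟨⟨p', q'⟩, hpq, hBG⟩ := exists_isWeightedHomogeneous_of_mul
    ((isWeightedHomogeneous_lineForm biWeight_inl P.rep).pow k) hB
    (left_ne_zero_of_mul hF0) (right_ne_zero_of_mul hF0)
  obtain rfl : q' = q := by simpa using congrArg Prod.snd hpq
  have hq : (m - k) * ZH.card ≤ q' := mul_card_le_of_not_lineForm_dvd hBG hPG fun Q hQ =>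
    mem_pointIdeal_pow_sub_of_pow_mul_mem (mem_symbPow.1 hF (P, Q) (Finset.mk_mem_product hP hQ))
  exact ⟨min k m, m - k, by lia, (Nat.mul_le_mul_right _ (min_le_left _ _)).trans hp, hq⟩

lemma rulingForm_pow_mul_mem_symbPow (ZV ZH : Finset ProjLine) (i j : ℕ) :
    rulingForm Sum.inl ZV ^ i * rulingForm Sum.inr ZH ^ j ∈ symbPow (ZV ×ˢ ZH) (i + j) := by
  refine mem_symbPow.2 fun ⟨P, Q⟩ hPQ => ?_
  obtain ⟨hP, hQ⟩ := Finset.mem_product.1 hPQ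
  rw [pow_add]
  refine Ideal.mul_mem_mul (Ideal.pow_mem_pow ?_ i) (Ideal.pow_mem_pow ?_ j)
  · exact Ideal.mem_of_dvd _ (Finset.dvd_prod_of_mem _ hP) (Ideal.subset_span (Or.inl rfl))
  · exact Ideal.mem_of_dvd _ (Finset.dvd_prod_of_mem _ hQ) (Ideal.subset_span (Or.inr rfl))

theorem exists_isBiForm_mem_symbPow_product {ZV ZH : Finset ProjLine} {i j p q : ℕ}
    (hp : i * ZV.card ≤ p) (hq : j * ZH.card ≤ q) :
    ∃ F ∈ symbPow (ZV ×ˢ ZH) (i + j), F ≠ 0 ∧ IsBiForm F p q := by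
  obtain ⟨r, rfl⟩ := Nat.exists_eq_add_of_le hp
  obtain ⟨s, rfl⟩ := Nat.exists_eq_add_of_le hq
  refine ⟨rulingForm Sum.inl ZV ^ i * rulingForm Sum.inr ZH ^ j *
    (X (Sum.inl 0) ^ r * X (Sum.inr 0) ^ s),
    Ideal.mul_mem_right _ _ (rulingForm_pow_mul_mem_symbPow ZV ZH i j), ?_, ?_⟩
  · exact mul_ne_zero (mul_ne_zero (pow_ne_zero _ (rulingForm_ne_zero Sum.inl_injective _))
      (pow_ne_zero _ (rulingForm_ne_zero Sum.inr_injective _)))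
      (mul_ne_zero (pow_ne_zero _ (X_ne_zero _)) (pow_ne_zero _ (X_ne_zero _)))
  · have h := (((isWeightedHomogeneous_rulingForm biWeight_inl ZV).pow i).mul
      ((isWeightedHomogeneous_rulingForm biWeight_inr ZH).pow j)).mul
      (((isWeightedHomogeneous_X ℂ biWeight (Sum.inl 0)).pow r).mul
        ((isWeightedHomogeneous_X ℂ biWeight (Sum.inr 0)).pow s))
    simpa [IsBiForm, biWeight] using h

theorem exists_isBiForm_mem_symbPow_product_iff {ZV ZH : Finset ProjLine} {m p q : ℕ} :
    (∃ F ∈ symbPow (ZV ×ˢ ZH) m, F ≠ 0 ∧ IsBiForm F p q) ↔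
      ∃ i j, i + j = m ∧ i * ZV.card ≤ p ∧ j * ZH.card ≤ q := by
  constructor
  · rintro ⟨F, hF, hF0, hB⟩
    exact exists_card_le_of_mem_symbPow_product hF hF0 hB
  · rintro ⟨i, j, rfl, hp, hq⟩
    exact exists_isBiForm_mem_symbPow_product hp hq

end SymbolicPower

section GridSeq

variable (a b : ℕ)

lemma exists_gridSeq_eq_mul (m : ℕ) :
    ∃ i j, i + j = m ∧ gridSeq a b m = (i * a, j * b) := by
  induction m with
  | zero => exact ⟨0, 0, by simp [gridSeq]⟩
  | succ m ih =>
    obtain ⟨i, j, rfl, h⟩ := ih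
    rw [gridSeq, h]
    split_ifs
    · exact ⟨i + 1, j, by ring, by rw [add_one_mul]⟩
    · exact ⟨i, j + 1, by ring, by rw [add_one_mul]⟩

lemma gridSeq_fst_le_snd_add (m : ℕ) : (gridSeq a b m).1 ≤ (gridSeq a b m).2 + b := by
  induction m with
  | zero => simp [gridSeq]
  | succ m ih => rw [gridSeq]; split_ifs <;> lia

lemma gridSeq_snd_le_fst_add (m : ℕ) : (gridSeq a b m).2 ≤ (gridSeq a b m).1 + a := by
  induction m with
  | zero => simp [gridSeq]
  | succ m ih => rw [gridSeq]; split_ifs <;> lia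

lemma max_gridSeq_le_max_mul (i j : ℕ) :
    max (gridSeq a b (i + j)).1 (gridSeq a b (i + j)).2 ≤ max (i * a) (j * b) := by
  obtain ⟨i', j', hij, h⟩ := exists_gridSeq_eq_mul a b (i + j)
  have hfst := gridSeq_fst_le_snd_add a b (i + j)
  have hsnd := gridSeq_snd_le_fst_add a b (i + j)
  rw [h] at hfst hsnd ⊢
  dsimp only at hfst hsnd ⊢
  rcases lt_trichotomy i i' with hi | rfl | hi
  · have hj : (j' + 1) * b ≤ j * b := Nat.mul_le_mul_right b (by lia)
    rw [add_one_mul] at hj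
    lia
  · rw [Nat.add_left_cancel hij]
  · have hi : (i' + 1) * a ≤ i * a := Nat.mul_le_mul_right a hi
    rw [add_one_mul] at hi
    lia

end GridSeq

/-- For the radical ideal `I` of an `(a,b)`-grid `Z = Z_V × Z_H` of points in `ℙ¹ × ℙ¹`
(`a, b ≥ 1`), one has `α*(I^{(m)}) = max{a_m, b_m}` for all `m ≥ 1`, where `(a_m,b_m)` is
the sequence associated to `(a,b)`. -/
theorem alphaStar_symbPow_grid (a b : ℕ) (ha : 1 ≤ a) (hb : 1 ≤ b)
    (ZV ZH : Finset ProjLine) (hV : ZV.card = a) (hH : ZH.card = b)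
    (m : ℕ) (hm : 1 ≤ m) :
    alphaStar (symbPow (ZV ×ˢ ZH) m) = max (gridSeq a b m).1 (gridSeq a b m).2 := by
  subst hV hH
  refine IsLeast.csInf_eq ⟨?_, fun t ht => ?_⟩
  · obtain ⟨i, j, hij, h⟩ := exists_gridSeq_eq_mul ZV.card ZH.card m
    rw [h]
    exact exists_isBiForm_mem_symbPow_product_iff.2
      ⟨i, j, hij, le_max_left _ _, le_max_right _ _⟩
  · obtain ⟨i, j, rfl, hi, hj⟩ := exists_isBiForm_mem_symbPow_product_iff.1 ht
    exact (max_gridSeq_le_max_mul _ _ i j).trans (max_le hi hj)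
end
end

section
/- Let Z = {P₁,…,P_s} be a finite set of distinct points of X = ℙ¹×ℙ¹ with radical ideal I. If α*(I^{(m)}) = α*(I^{(m+1)}) for some integer m ≥ 1, then there exist finite sets Z_V, Z_H ⊂ ℙ¹ such that Z = Z_V × Z_H, i.e. Z is a grid in X. -/
open MvPolynomial

noncomputable section

/-!
In an affine chart, let `t` be the common value of `α*` and let `f` be a curve of bidegree `(t, t)`
with multiplicity at least `m + 1` on `Z`. By minimality of `t`, replacing a factor of `f` by one of
strictly smaller bidegree must produce multiplicity less than `m` at some point of `Z`. An
irreducible factor `D` of positive degree in both directions could be replaced by an adjoint curve,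
which loses at most one at every point; adjoints exist because Bezout's inequality for `D` and its
derivative bounds the number of conditions. Hence `f` is a product of fibres of the two projections.
Removing two crossing fibres of the curve lowers the multiplicity by two only where they meet, so
that point belongs to `Z` and has multiplicity exactly `m + 1`. Conversely both fibres through a
point of `Z` lie on the curve, so `Z` consists of all the crossings.
-/

section Degree

variable {σ τ : Type*}

theorem degreeOf_aeval_le {R : Type*} [CommSemiring R] (i : τ) (g : σ → MvPolynomial τ R)
    {f : MvPolynomial σ R} {n : ℕ}
    (h : ∀ s ∈ f.support, (s.sum fun j k ↦ k * degreeOf i (g j)) ≤ n) :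
    degreeOf i (aeval g f) ≤ n := by
  rw [aeval_def, eval₂_eq]
  refine (degreeOf_sum_le _ _ _).trans (Finset.sup_le fun s hs ↦ le_trans ?_ (h s hs))
  calc degreeOf i (C (coeff s f) * ∏ j ∈ s.support, g j ^ s j)
      ≤ degreeOf i (∏ j ∈ s.support, g j ^ s j) := degreeOf_C_mul_le _ _ _
    _ ≤ ∑ j ∈ s.support, degreeOf i (g j ^ s j) := degreeOf_prod_le _ _ _
    _ ≤ ∑ j ∈ s.support, s j * degreeOf i (g j) :=
        Finset.sum_le_sum fun j _ ↦ degreeOf_pow_le _ _ _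

theorem degreeOf_pderiv_le {R : Type*} [CommSemiring R] (i j : σ) (f : MvPolynomial σ R) :
    degreeOf j (pderiv i f) ≤ degreeOf j f := by
  rw [degreeOf_le_iff]
  intro s hs
  rw [mem_support_iff, coeff_pderiv] at hs
  have := monomial_le_degreeOf j (mem_support_iff.mpr (left_ne_zero_of_mul hs))
  rw [Finsupp.add_apply] at this
  lia

theorem degreeOf_pderiv_self_le {R : Type*} [CommSemiring R] (i : σ) (f : MvPolynomial σ R) :
    degreeOf i (pderiv i f) ≤ degreeOf i f - 1 := by
  rw [degreeOf_le_iff]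
  intro s hs
  rw [mem_support_iff, coeff_pderiv] at hs
  have := monomial_le_degreeOf i (mem_support_iff.mpr (left_ne_zero_of_mul hs))
  rw [Finsupp.add_apply, Finsupp.single_eq_same] at this
  lia

theorem pderiv_ne_zero {R : Type*} [CommSemiring R] [NoZeroDivisors R] [CharZero R] {i : σ}
    {f : MvPolynomial σ R} (h : degreeOf i f ≠ 0) : pderiv i f ≠ 0 := by
  obtain ⟨s, hs, hi⟩ := (mem_vars_iff_mem_support i).mp (mem_vars_iff_degreeOf_ne_zero.mpr h)
  have hle : Finsupp.single i 1 ≤ s :=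
    Finsupp.single_le_iff.mpr (Nat.one_le_iff_ne_zero.mpr (Finsupp.mem_support_iff.mp hi))
  refine ne_zero_iff.mpr ⟨s - Finsupp.single i 1, ?_⟩
  rw [coeff_pderiv, tsub_add_cancel_of_le hle]
  exact mul_ne_zero (mem_support_iff.mp hs) (Nat.cast_add_one_ne_zero _)

theorem degreeOf_le_of_dvd {R : Type*} [CommSemiring R] [NoZeroDivisors R] {f g : MvPolynomial σ R}
    (hg : g ≠ 0) (h : f ∣ g) (i : σ) : degreeOf i f ≤ degreeOf i g := by
  obtain ⟨u, rfl⟩ := h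
  rw [degreeOf_mul_eq (left_ne_zero_of_mul hg) (right_ne_zero_of_mul hg)]
  exact Nat.le_add_right _ _

theorem isUnit_of_degreeOf_eq_zero {K : Type*} [Field K] {f : MvPolynomial σ K} (hf : f ≠ 0)
    (h : ∀ i, degreeOf i f = 0) : IsUnit f := by
  have hC : f = C (coeff 0 f) := vars_eq_empty_iff_eq_C.mp <|
    Finset.eq_empty_of_forall_notMem fun i hi ↦ mem_vars_iff_degreeOf_ne_zero.mp hi (h i)
  rw [hC] at hf ⊢
  exact (isUnit_iff_ne_zero.mpr fun h0 ↦ hf (by rw [h0, C_0])).map C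

theorem degreeOf_eq_zero_of_irreducible_dvd {K : Type*} [Field K] {i : σ} {f : MvPolynomial σ K}
    (h : ∀ D, Irreducible D → D ∣ f → degreeOf i D = 0) : degreeOf i f = 0 := by
  induction f using WfDvdMonoid.induction_on_irreducible with
  | zero => exact degreeOf_zero i
  | unit u hu => simpa using degreeOf_le_of_dvd one_ne_zero hu.dvd i
  | mul a D ha hD ih =>
    rw [degreeOf_mul_eq hD.ne_zero ha, h D hD (dvd_mul_right _ _),
      ih fun E hE hEa ↦ h E hE (hEa.mul_left _)]

theorem exists_irreducible_dvd_of_eval_eq_zero {K : Type*} [Field K] {z : σ → K}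
    {f : MvPolynomial σ K} (hf : f ≠ 0) (h : eval z f = 0) :
    ∃ D, Irreducible D ∧ D ∣ f ∧ eval z D = 0 := by
  induction f using WfDvdMonoid.induction_on_irreducible with
  | zero => exact absurd rfl hf
  | unit u hu => exact absurd h (hu.map (eval z)).ne_zero
  | mul a D ha hD ih =>
    rcases mul_eq_zero.mp ((map_mul (eval z) D a).symm.trans h) with h | h
    · exact ⟨D, hD, dvd_mul_right _ _, h⟩
    · obtain ⟨E, hE, hEa, hEz⟩ := ih ha h
      exact ⟨E, hE, hEa.mul_left _, hEz⟩

end Degree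

section Translation

variable {σ R : Type*} [CommRing R]

/-- The substitution `X i ↦ X i + z i`, which moves the point `z` to the origin. -/
def polyTranslate (z : σ → R) : MvPolynomial σ R ≃ₐ[R] MvPolynomial σ R :=
  AlgEquiv.ofAlgHom (aeval fun i ↦ X i + C (z i)) (aeval fun i ↦ X i - C (z i))
    (by ext; simp) (by ext; simp)

@[simp]
theorem polyTranslate_X (z : σ → R) (i : σ) : polyTranslate z (X i) = X i + C (z i) :=
  aeval_X _ i

@[simp]
theorem polyTranslate_C (z : σ → R) (c : R) : polyTranslate z (C c) = C c :=
  (polyTranslate z).commutes c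

theorem polyTranslate_symm (z : σ → R) : (polyTranslate z).symm = polyTranslate (-z) := by
  refine AlgEquiv.coe_toAlgHom_injective (algHom_ext fun i ↦ ?_)
  simp [AlgEquiv.symm_apply_eq]

theorem pderiv_polyTranslate (z : σ → R) (i : σ) (f : MvPolynomial σ R) :
    pderiv i (polyTranslate z f) = polyTranslate z (pderiv i f) := by
  induction f using MvPolynomial.induction_on with
  | C a => simp
  | add p q hp hq => simp only [map_add, hp, hq]
  | mul_X p j hp =>
    have hX : pderiv i (polyTranslate z (X j)) = polyTranslate z (pderiv i (X j)) := by
      classical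
      rw [polyTranslate_X, map_add, pderiv_C, add_zero, pderiv_X, Pi.single_apply]
      split_ifs <;> simp
    simp only [map_mul, pderiv_mul, map_add, hp, hX]

theorem coeff_zero_polyTranslate (z : σ → R) (f : MvPolynomial σ R) :
    coeff 0 (polyTranslate z f) = eval z f := by
  have : (constantCoeff : MvPolynomial σ R →+* R).comp (polyTranslate z : _ →+* MvPolynomial σ R) =
      eval z := by
    ext <;> simp
  exact DFunLike.congr_fun this f

theorem degreeOf_polyTranslate (z : σ → R) (i : σ) (f : MvPolynomial σ R) :
    degreeOf i (polyTranslate z f) = degreeOf i f := by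
  have hle (w : σ → R) (g : MvPolynomial σ R) :
      degreeOf i (polyTranslate w g) ≤ degreeOf i g := by
    classical
    cases subsingleton_or_nontrivial R
    · rw [Subsingleton.elim (polyTranslate w g) g]
    have hX (j : σ) : degreeOf i (X j + C (w j)) ≤ if i = j then 1 else 0 := by
      simpa only [degreeOf_X, degreeOf_C, max_eq_left (Nat.zero_le _)] using
        degreeOf_add_le i (X j) (C (w j))
    refine degreeOf_aeval_le i _ fun s hs ↦ le_trans ?_ (monomial_le_degreeOf i hs)
    calc (s.sum fun j k ↦ k * degreeOf i (X j + C (w j)))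
        ≤ s.sum fun j k ↦ k * if i = j then 1 else 0 :=
          Finset.sum_le_sum fun j _ ↦ Nat.mul_le_mul_left _ (hX j)
      _ ≤ s i := by
        simp only [mul_ite, mul_one, mul_zero, Finsupp.sum_ite_eq]
        split_ifs <;> simp
  refine (hle z f).antisymm ?_
  simpa only [← polyTranslate_symm, AlgEquiv.symm_apply_apply] using hle (-z) (polyTranslate z f)

theorem polyTranslate_neg_X (c : R) (i : σ) : polyTranslate (fun _ ↦ -c) (X i) = X i - C c := by
  simp [sub_eq_add_neg]

theorem degreeOf_X_sub_C [Nontrivial R] [DecidableEq σ] (i j : σ) (c : R) :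
    degreeOf j (X i - C c) = if j = i then 1 else 0 := by
  rw [← polyTranslate_neg_X, degreeOf_polyTranslate, degreeOf_X]

theorem prime_X_sub_C [IsDomain R] (i : σ) (c : R) : Prime (X i - C c) := by
  rw [← polyTranslate_neg_X]
  exact (MulEquiv.prime_iff (polyTranslate fun _ ↦ -c)).mpr X_prime

theorem isRelPrime_X_sub_C [IsDomain R] {i j : σ} (hij : i ≠ j) (a c : R) :
    IsRelPrime (X i - C a) (X j - C c) := by
  classical
  refine (prime_X_sub_C i a).irreducible.isRelPrime_iff_not_dvd.mpr fun h ↦ ?_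
  have := degreeOf_le_of_dvd (prime_X_sub_C j c).ne_zero h i
  simp [degreeOf_X_sub_C, hij] at this

end Translation

theorem exists_associated_X_sub_C {σ K : Type*} [Field K] [IsAlgClosed K] {i : σ}
    {D : MvPolynomial σ K} (hD : Irreducible D) (h : ∀ j ≠ i, degreeOf j D = 0) :
    ∃ c, Associated (X i - C c) D := by
  have hmem : D ∈ supported K {i} := mem_supported.mpr fun j hj ↦ by
    by_contra hji
    exact mem_vars_iff_degreeOf_ne_zero.mp hj (h j hji)
  rw [supported_eq_adjoin_X, Set.image_singleton, Algebra.adjoin_singleton_eq_range_aeval] at hmem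
  obtain ⟨p, rfl⟩ := hmem
  have hp : p.degree ≠ 0 := fun hp ↦ hD.not_isUnit <|
    (Polynomial.isUnit_iff_degree_eq_zero.mpr hp).map (Polynomial.aeval (X i : MvPolynomial σ K))
  obtain ⟨c, hc⟩ := IsAlgClosed.exists_root p hp
  have hdvd : X i - C c ∣ Polynomial.aeval (X i : MvPolynomial σ K) p := by
    simpa using map_dvd (Polynomial.aeval (X i : MvPolynomial σ K))
      (Polynomial.dvd_iff_isRoot.mpr hc)
  exact ⟨c, (prime_X_sub_C i c).irreducible.associated_of_dvd hD hdvd⟩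

section VanishingOrder

variable {σ R : Type*} [CommRing R]

/-- The order of vanishing of `f` at the point `z`, which is the multiplicity of the hypersurface
`f = 0` at `z`; it is `⊤` for `f = 0`. -/
def vanishingOrder (z : σ → R) (f : MvPolynomial σ R) : ℕ∞ :=
  (polyTranslate z f : MvPowerSeries σ R).order

theorem natCast_le_vanishingOrder_iff {z : σ → R} {f : MvPolynomial σ R} {k : ℕ} :
    (k : ℕ∞) ≤ vanishingOrder z f ↔
      ∀ s : σ →₀ ℕ, s.degree < k → coeff s (polyTranslate z f) = 0 := by
  refine ⟨fun h s hs ↦ ?_, fun h ↦ MvPowerSeries.nat_le_order fun s hs ↦ ?_⟩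
  · rw [← coeff_coe]
    exact MvPowerSeries.coeff_of_lt_order ((Nat.cast_lt.mpr hs).trans_le h)
  · rw [coeff_coe, h s hs]

theorem vanishingOrder_ne_top (z : σ → R) {f : MvPolynomial σ R} (hf : f ≠ 0) :
    vanishingOrder z f ≠ ⊤ := by
  rw [vanishingOrder, Ne, MvPowerSeries.order_eq_top_iff, coe_eq_zero_iff]
  exact (map_ne_zero_iff _ (polyTranslate z).injective).mpr hf

theorem vanishingOrder_mul [NoZeroDivisors R] (z : σ → R) (f g : MvPolynomial σ R) :
    vanishingOrder z (f * g) = vanishingOrder z f + vanishingOrder z g := by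
  rw [vanishingOrder, map_mul, coe_mul, MvPowerSeries.order_mul]
  rfl

theorem vanishingOrder_eq_zero_iff {z : σ → R} {f : MvPolynomial σ R} :
    vanishingOrder z f = 0 ↔ eval z f ≠ 0 := by
  rw [← coeff_zero_polyTranslate, ← Order.lt_one_iff, ← not_le, not_iff_not, ← Nat.cast_one,
    natCast_le_vanishingOrder_iff]
  simp only [Nat.lt_one_iff, Finsupp.degree_eq_zero_iff, forall_eq]

theorem one_le_vanishingOrder_iff {z : σ → R} {f : MvPolynomial σ R} :
    1 ≤ vanishingOrder z f ↔ eval z f = 0 := by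
  rw [Order.one_le_iff_ne_zero, ← not_iff_not, not_not, vanishingOrder_eq_zero_iff]

theorem vanishingOrder_one [Nontrivial R] (z : σ → R) : vanishingOrder z 1 = 0 :=
  vanishingOrder_eq_zero_iff.mpr (by simp)

theorem vanishingOrder_pow [NoZeroDivisors R] [Nontrivial R] (z : σ → R) (f : MvPolynomial σ R)
    (n : ℕ) : vanishingOrder z (f ^ n) = n * vanishingOrder z f := by
  induction n with
  | zero => simp [vanishingOrder_one]
  | succ n ih => rw [pow_succ, vanishingOrder_mul, ih, Nat.cast_succ, add_mul, one_mul]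

theorem vanishingOrder_le_pderiv (z : σ → R) (i : σ) (f : MvPolynomial σ R) :
    vanishingOrder z f ≤ vanishingOrder z (pderiv i f) + 1 := by
  refine ENat.forall_natCast_le_iff_le.mp fun n hn ↦ ?_
  cases n with
  | zero => exact zero_le
  | succ k =>
    rw [Nat.cast_succ]
    gcongr
    rw [natCast_le_vanishingOrder_iff] at hn ⊢
    intro s hs
    rw [← pderiv_polyTranslate, coeff_pderiv, hn, zero_mul]
    rwa [map_add, Finsupp.degree_single, Nat.add_lt_add_iff_right]

theorem vanishingOrder_X_sub_C_le [Nontrivial R] (z : σ → R) (i : σ) (c : R) :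
    vanishingOrder z (X i - C c) ≤ 1 := by
  have h : pderiv i (X i - C c) = 1 := by rw [map_sub, pderiv_X_self, pderiv_C, sub_zero]
  rw [← zero_add 1, ← vanishingOrder_one z, ← h]
  exact vanishingOrder_le_pderiv z i _

theorem vanishingOrder_X_sub_C_eq_zero {z : σ → R} {i : σ} {c : R} (h : z i ≠ c) :
    vanishingOrder z (X i - C c) = 0 :=
  vanishingOrder_eq_zero_iff.mpr (by simpa [sub_eq_zero] using h)

/-- The ideal of polynomials vanishing at the point `z`. -/
def affinePointIdeal (z : σ → R) : Ideal (MvPolynomial σ R) :=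
  Ideal.span (Set.range fun i ↦ X i - C (z i))

theorem le_vanishingOrder_of_mem_pow {z : σ → R} {k : ℕ} {f : MvPolynomial σ R}
    (h : f ∈ affinePointIdeal z ^ k) : (k : ℕ∞) ≤ vanishingOrder z f := by
  have hle : (affinePointIdeal z).map (polyTranslate z) ≤ idealOfVars σ R := by
    rw [affinePointIdeal, Ideal.map_span, Ideal.span_le]
    rintro _ ⟨_, ⟨i, rfl⟩, rfl⟩
    simpa using Ideal.subset_span (Set.mem_range_self i)
  rw [natCast_le_vanishingOrder_iff, ← mem_pow_idealOfVars_iff']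
  exact Ideal.pow_right_mono hle k (Ideal.map_pow (polyTranslate z) (affinePointIdeal z) k ▸
    Ideal.mem_map_of_mem _ h)

theorem isCoprime_affinePointIdeal {K : Type*} [Field K] {z w : σ → K} (h : z ≠ w) :
    IsCoprime (affinePointIdeal z) (affinePointIdeal w) := by
  obtain ⟨i, hi⟩ := Function.ne_iff.mp h
  rw [Ideal.isCoprime_iff_sup_eq, Ideal.eq_top_iff_one]
  have hmem : X i - C (w i) - (X i - C (z i)) ∈ affinePointIdeal z ⊔ affinePointIdeal w :=
    Ideal.sub_mem _ (Ideal.mem_sup_right (Ideal.subset_span ⟨i, rfl⟩))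
      (Ideal.mem_sup_left (Ideal.subset_span ⟨i, rfl⟩))
  rw [sub_sub_sub_cancel_left, ← C_sub] at hmem
  have := Ideal.mul_mem_left _ (C (z i - w i)⁻¹) hmem
  rwa [← C_mul, inv_mul_cancel₀ (sub_ne_zero.mpr hi), C_1] at this

end VanishingOrder

section LinearSystem

variable {σ K : Type*}

/-- The indices of the linear conditions imposed by vanishing to order `k z` at each `z ∈ Z`: the
Taylor coefficients of degree less than `k z` at `z`. -/
abbrev JetIndex (Z : Finset (σ → K)) (k : (σ → K) → ℕ) : Type _ :=
  Σ z : Z, {s : σ →₀ ℕ // s.degree < k z}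

instance [Finite σ] (n : ℕ) : Finite {s : σ →₀ ℕ // s.degree < n} :=
  Finsupp.finite_of_degree_lt n

theorem card_finsupp_degree_lt (n : ℕ) :
    Nat.card {s : Fin 2 →₀ ℕ // s.degree < n} * 2 = n * (n + 1) := by
  classical
  have hunion : {s : Fin 2 →₀ ℕ | s.degree < n} =
      ↑((Finset.range n).biUnion fun a ↦ (Finset.univ : Finset (Fin 2)).finsuppAntidiag a) := by
    ext s
    simp [Finsupp.degree_eq_sum]
  have hdisj : Set.PairwiseDisjoint (Finset.range n : Set ℕ)
      fun a ↦ (Finset.univ : Finset (Fin 2)).finsuppAntidiag a := fun a _ b _ hab ↦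
    Finset.disjoint_left.mpr fun s ha hb ↦
      hab ((Finset.mem_finsuppAntidiag.mp ha).1.symm.trans (Finset.mem_finsuppAntidiag.mp hb).1)
  have hcard (a : ℕ) : ((Finset.univ : Finset (Fin 2)).finsuppAntidiag a).card = a + 1 := by
    rw [Finset.card_finsuppAntidiag_nat_eq_choose, Finset.card_fin,
      show 2 + a - 1 = a + 1 by lia, Nat.choose_succ_self_right]
  calc Nat.card {s : Fin 2 →₀ ℕ // s.degree < n} * 2
      = (∑ a ∈ Finset.range n, (a + 1)) * 2 := by
        rw [← Set.coe_ofPred, hunion, Nat.card_coe_set_eq, Set.ncard_coe_finset,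
          Finset.card_biUnion hdisj]
        simp only [hcard]
    _ = n * (n + 1) := by
        rw [← add_zero (∑ a ∈ Finset.range n, (a + 1)), ← Finset.sum_range_succ' fun a ↦ a,
          Finset.sum_range_id_mul_two, Nat.add_sub_cancel, mul_comm]

theorem card_jetIndex_mul_two (Z : Finset (Fin 2 → K)) (k : (Fin 2 → K) → ℕ) :
    Nat.card (JetIndex Z k) * 2 = ∑ z ∈ Z, k z * (k z + 1) := by
  rw [Nat.card_sigma, Finset.sum_mul, ← Finset.sum_coe_sort Z]
  exact Finset.sum_congr rfl fun z _ ↦ card_finsupp_degree_lt (k z)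

theorem card_jetIndex_add (Z : Finset (Fin 2 → K)) (μ ν : (Fin 2 → K) → ℕ) :
    Nat.card (JetIndex Z (μ + ν)) =
      Nat.card (JetIndex Z μ) + Nat.card (JetIndex Z ν) + ∑ z ∈ Z, μ z * ν z := by
  refine Nat.eq_of_mul_eq_mul_right two_pos ?_
  simp only [add_mul, card_jetIndex_mul_two, Finset.sum_mul, ← Finset.sum_add_distrib,
    Pi.add_apply]
  exact Finset.sum_congr rfl fun z _ ↦ by ring

variable [Field K]

/-- The space of polynomials whose degree in each variable `i` is at most `d i`. -/
def multidegreeLE (K : Type*) [Field K] (d : σ → ℕ) :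
    Submodule K (MvPolynomial σ K) :=
  restrictSupport K {s | ⇑s ≤ d}

theorem mem_multidegreeLE {d : σ → ℕ} {f : MvPolynomial σ K} :
    f ∈ multidegreeLE K d ↔ ∀ i, degreeOf i f ≤ d i := by
  simp only [multidegreeLE, mem_restrictSupport_iff, degreeOf_le_iff]
  exact ⟨fun h i s hs ↦ h hs i, fun h s hs i ↦ h i s hs⟩

theorem mem_multidegreeLE_of_mul {d : σ → ℕ} {f g : MvPolynomial σ K} (hf : f ≠ 0)
    (h : f * g ∈ multidegreeLE K fun i ↦ degreeOf i f + d i) : g ∈ multidegreeLE K d := by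
  rcases eq_or_ne g 0 with rfl | hg
  · exact Submodule.zero_mem _
  · simpa only [mem_multidegreeLE, degreeOf_mul_eq hf hg, Nat.add_le_add_iff_left] using h

instance [Finite σ] (d : σ → ℕ) : FiniteDimensional K (multidegreeLE K d) := by
  have := Fintype.ofFinite σ
  classical
  have : Finite {s : σ →₀ ℕ | ⇑s ≤ d} :=
    (Set.finite_Iic d).preimage DFunLike.coe_injective.injOn
  exact Module.Finite.of_basis (basisRestrictSupport K _)

theorem finrank_multidegreeLE [Fintype σ] (d : σ → ℕ) :
    Module.finrank K (multidegreeLE K d) = ∏ i, (d i + 1) := by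
  classical
  calc Module.finrank K (multidegreeLE K d)
      = Nat.card {s : σ →₀ ℕ | ⇑s ≤ d} :=
        Module.finrank_eq_nat_card_basis (basisRestrictSupport K _)
    _ = Nat.card (Set.Iic d) :=
        Nat.card_congr (Finsupp.equivFunOnFinite.subtypeEquiv fun _ ↦ Iff.rfl)
    _ = ∏ i, (d i + 1) := by
        rw [Nat.card_eq_fintype_card, Fintype.card_Iic, Pi.card_Iic]
        simp only [Nat.card_Iic]

/-- The linear map sending a polynomial to its Taylor coefficients of degree less than `k z` at
each `z ∈ Z`. -/
def jet (Z : Finset (σ → K)) (k : (σ → K) → ℕ) : MvPolynomial σ K →ₗ[K] (JetIndex Z k → K) :=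
  LinearMap.pi fun x ↦ lcoeff K x.2.1 ∘ₗ (polyTranslate x.1.1).toLinearMap

theorem jet_apply {Z : Finset (σ → K)} {k : (σ → K) → ℕ} (f : MvPolynomial σ K)
    (x : JetIndex Z k) : jet Z k f x = coeff x.2.1 (polyTranslate x.1.1 f) :=
  rfl

theorem mem_ker_jet {Z : Finset (σ → K)} {k : (σ → K) → ℕ} {f : MvPolynomial σ K} :
    f ∈ LinearMap.ker (jet Z k) ↔ ∀ z ∈ Z, (k z : ℕ∞) ≤ vanishingOrder z f := by
  simp only [LinearMap.mem_ker, funext_iff, jet_apply, natCast_le_vanishingOrder_iff]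
  exact ⟨fun h z hz s hs ↦ h ⟨⟨z, hz⟩, s, hs⟩, fun h x ↦ h x.1 x.1.2 x.2.1 x.2.2⟩

theorem jet_surjective [Finite σ] (Z : Finset (σ → K)) (k : (σ → K) → ℕ) :
    Function.Surjective (jet Z k) := by
  have (n : ℕ) : Fintype {s : σ →₀ ℕ // s.degree < n} := Fintype.ofFinite _
  intro v
  let taylor (z : Z) : MvPolynomial σ K :=
    ∑ s : {s : σ →₀ ℕ // s.degree < k z}, monomial s.1 (v ⟨z, s⟩)
  have coeff_taylor (x : JetIndex Z k) : coeff x.2.1 (taylor x.1) = v x := by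
    classical
    simp only [taylor, coeff_sum, coeff_monomial, ← Subtype.ext_iff]
    rw [Finset.sum_ite_eq' Finset.univ x.2 fun s ↦ v ⟨x.1, s⟩, if_pos (Finset.mem_univ _)]
  obtain ⟨f, hf⟩ := Ideal.exists_forall_sub_mem_ideal
    (I := fun z : Z ↦ affinePointIdeal z.1 ^ k z.1)
    (fun z w hzw ↦ (isCoprime_affinePointIdeal (Subtype.coe_ne_coe.mpr hzw)).pow)
    fun z ↦ (polyTranslate z.1).symm (taylor z)
  refine ⟨f, funext fun x ↦ ?_⟩
  have hx := natCast_le_vanishingOrder_iff.mp (le_vanishingOrder_of_mem_pow (hf x.1)) x.2.1 x.2.2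
  rw [map_sub, AlgEquiv.apply_symm_apply, coeff_sub, sub_eq_zero, coeff_taylor] at hx
  rw [jet_apply, hx]

/-- The polynomials of multidegree at most `d` which vanish to order at least `k z` at each
`z ∈ Z`. -/
def linearSystem (d : σ → ℕ) (Z : Finset (σ → K)) (k : (σ → K) → ℕ) :
    Submodule K (MvPolynomial σ K) :=
  multidegreeLE K d ⊓ LinearMap.ker (jet Z k)

theorem mem_linearSystem {d : σ → ℕ} {Z : Finset (σ → K)} {k : (σ → K) → ℕ}
    {f : MvPolynomial σ K} : f ∈ linearSystem d Z k ↔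
      (∀ i, degreeOf i f ≤ d i) ∧ ∀ z ∈ Z, (k z : ℕ∞) ≤ vanishingOrder z f := by
  rw [linearSystem, Submodule.mem_inf, mem_multidegreeLE, mem_ker_jet]

theorem mul_mem_linearSystem {Z : Finset (σ → K)} {μ ν : (σ → K) → ℕ} {d : σ → ℕ}
    {f g : MvPolynomial σ K} (hf : ∀ z ∈ Z, (μ z : ℕ∞) ≤ vanishingOrder z f)
    (hg : g ∈ linearSystem d Z ν) :
    f * g ∈ linearSystem (fun i ↦ degreeOf i f + d i) Z (μ + ν) := by
  rw [mem_linearSystem] at hg ⊢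
  refine ⟨fun i ↦ (degreeOf_mul_le i f g).trans (Nat.add_le_add_left (hg.1 i) _), fun z hz ↦ ?_⟩
  rw [vanishingOrder_mul, Pi.add_apply, Nat.cast_add]
  exact add_le_add (hf z hz) (hg.2 z hz)

instance [Finite σ] (d : σ → ℕ) (Z : Finset (σ → K)) (k : (σ → K) → ℕ) :
    FiniteDimensional K (linearSystem d Z k) :=
  Submodule.finiteDimensional_inf_left _ _

theorem finrank_linearSystem_add [Fintype σ] (d : σ → ℕ) (Z : Finset (σ → K))
    (k : (σ → K) → ℕ) :
    Module.finrank K (linearSystem d Z k) +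
      Module.finrank K ((multidegreeLE K d).map (jet Z k)) = ∏ i, (d i + 1) := by
  rw [← finrank_multidegreeLE (K := K), linearSystem, ← LinearMap.range_domRestrict,
    ← LinearMap.finrank_range_add_finrank_ker ((jet Z k).domRestrict (multidegreeLE K d)),
    LinearMap.ker_domRestrict, ← Submodule.map_comap_subtype, Submodule.finrank_map_subtype_eq,
    add_comm]

theorem prod_le_finrank_linearSystem_add_card [Fintype σ] (d : σ → ℕ) (Z : Finset (σ → K))
    (k : (σ → K) → ℕ) :
    ∏ i, (d i + 1) ≤ Module.finrank K (linearSystem d Z k) + Nat.card (JetIndex Z k) := by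
  have := Fintype.ofFinite (JetIndex Z k)
  rw [← finrank_linearSystem_add d Z k, Nat.card_eq_fintype_card,
    ← Module.finrank_fintype_fun_eq_card K]
  gcongr
  exact Submodule.finrank_le _

theorem exists_finrank_linearSystem_add_card [Fintype σ] (Z : Finset (σ → K))
    (k : (σ → K) → ℕ) : ∃ N, ∀ d : σ → ℕ, (∀ i, N ≤ d i) →
      Module.finrank K (linearSystem d Z k) + Nat.card (JetIndex Z k) = ∏ i, (d i + 1) := by
  classical
  have := Fintype.ofFinite (JetIndex Z k)
  choose g hg using fun x : JetIndex Z k ↦ jet_surjective Z k (Pi.single x 1)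
  refine ⟨Finset.univ.sup fun x ↦ (g x).totalDegree, fun d hd ↦ ?_⟩
  have htop : (multidegreeLE K d).map (jet Z k) = ⊤ := by
    rw [eq_top_iff, ← (Pi.basisFun K (JetIndex Z k)).span_eq, Submodule.span_le]
    rintro _ ⟨x, rfl⟩
    refine ⟨g x, mem_multidegreeLE.mpr fun i ↦ ?_, by rw [hg, Pi.basisFun_apply]⟩
    exact (degreeOf_le_totalDegree _ _).trans
      ((Finset.le_sup (f := fun x ↦ (g x).totalDegree) (Finset.mem_univ x)).trans (hd i))
  rw [← finrank_linearSystem_add d Z k, htop, finrank_top, Module.finrank_fintype_fun_eq_card,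
    Nat.card_eq_fintype_card]

theorem exists_mem_linearSystem_ne_zero [Fintype σ] {d : σ → ℕ} {Z : Finset (σ → K)}
    {k : (σ → K) → ℕ} (h : Nat.card (JetIndex Z k) < ∏ i, (d i + 1)) :
    ∃ f ∈ linearSystem d Z k, f ≠ 0 := by
  refine (Submodule.ne_bot_iff _).mp fun hbot ↦ ?_
  have := prod_le_finrank_linearSystem_add_card d Z k
  rw [hbot, finrank_bot] at this
  lia

end LinearSystem

/-- Comparing the two ends of the Koszul sequence `0 → A → A ⊕ A → A` of the pair `D, H`. -/
theorem finrank_add_finrank_le_of_prime {K A : Type*} [Field K] [CommRing A] [IsDomain A]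
    [Algebra K A] {D H : A} (hD : Prime D) (hDH : ¬ D ∣ H) {P Q T U : Submodule K A}
    [FiniteDimensional K T] [FiniteDimensional K U] (hP : ∀ p ∈ P, D * p ∈ T)
    (hQ : ∀ q ∈ Q, H * q ∈ T) (hU : ∀ g, D * g ∈ Q → g ∈ U) :
    Module.finrank K P + Module.finrank K Q ≤ Module.finrank K T + Module.finrank K U := by
  have finrank_map {a : A} (ha : a ≠ 0) (V : Submodule K A) :
      Module.finrank K (V.map (LinearMap.mulLeft K a)) = Module.finrank K V :=
    (Submodule.equivMapOfInjective _ (mul_right_injective₀ ha) V).finrank_eq.symm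
  have hH : H ≠ 0 := fun h ↦ hDH (h ▸ dvd_zero D)
  set DP := P.map (LinearMap.mulLeft K D)
  set HQ := Q.map (LinearMap.mulLeft K H)
  have hDP : DP ≤ T := Submodule.map_le_iff_le_comap.mpr hP
  have hHQ : HQ ≤ T := Submodule.map_le_iff_le_comap.mpr hQ
  have hinf : DP ⊓ HQ ≤ U.map (LinearMap.mulLeft K (D * H)) := by
    rintro _ ⟨⟨p, -, rfl⟩, q, hq, hpq⟩
    obtain ⟨g, rfl⟩ := (hD.dvd_or_dvd (Dvd.intro p hpq.symm)).resolve_left hDH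
    exact ⟨g, hU g hq, by rw [← hpq]; simp only [LinearMap.mulLeft_apply]; ring⟩
  have := Submodule.finiteDimensional_of_le hDP
  have := Submodule.finiteDimensional_of_le hHQ
  calc Module.finrank K P + Module.finrank K Q
      = Module.finrank K DP + Module.finrank K HQ := by
        rw [finrank_map hD.ne_zero, finrank_map hH]
    _ = Module.finrank K ↑(DP ⊔ HQ) + Module.finrank K ↑(DP ⊓ HQ) :=
        (Submodule.finrank_sup_add_finrank_inf_eq DP HQ).symm
    _ ≤ Module.finrank K T + Module.finrank K U := by
        gcongr
        · exact Submodule.finrank_mono (sup_le hDP hHQ)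
        · exact (Submodule.finrank_mono hinf).trans_eq (finrank_map (mul_ne_zero hD.ne_zero hH) U)

section Bezout

variable {K : Type*} [Field K]

/-- Bezout's inequality on `ℙ¹ × ℙ¹`, by a dimension count in high degree: multiplying linear
systems by `D` and by `H` lands in the system with the orders of vanishing added. -/
theorem sum_mul_le_of_irreducible {D H : MvPolynomial (Fin 2) K} (hD : Irreducible D)
    (hDH : ¬ D ∣ H) {Z : Finset (Fin 2 → K)} {μ ν : (Fin 2 → K) → ℕ}
    (hμ : ∀ z ∈ Z, (μ z : ℕ∞) ≤ vanishingOrder z D)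
    (hν : ∀ z ∈ Z, (ν z : ℕ∞) ≤ vanishingOrder z H) :
    ∑ z ∈ Z, μ z * ν z ≤ degreeOf 0 D * degreeOf 1 H + degreeOf 1 D * degreeOf 0 H := by
  obtain ⟨N, hN⟩ := exists_finrank_linearSystem_add_card Z (μ + ν)
  let degD (i : Fin 2) : ℕ := degreeOf i D + N
  let degH (i : Fin 2) : ℕ := degreeOf i H + N
  let degDH (i : Fin 2) : ℕ := degreeOf i D + degH i
  have hHD : (fun i ↦ degreeOf i H + degD i) = degDH := funext fun i ↦ Nat.add_left_comm _ _ _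
  have key := finrank_add_finrank_le_of_prime (K := K) hD.prime hDH
    (P := linearSystem degH Z ν) (Q := linearSystem degD Z μ)
    (T := linearSystem degDH Z (μ + ν)) (U := multidegreeLE K fun _ ↦ N)
    (fun p hp ↦ mul_mem_linearSystem hμ hp)
    (fun q hq ↦ hHD ▸ add_comm ν μ ▸ mul_mem_linearSystem hν hq)
    (fun g hg ↦ mem_multidegreeLE_of_mul hD.ne_zero hg.1)
  have hP := prod_le_finrank_linearSystem_add_card degH Z ν
  have hQ := prod_le_finrank_linearSystem_add_card degD Z μ
  have hT := hN degDH fun i ↦ (Nat.le_add_left _ _).trans (Nat.le_add_left _ _)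
  rw [card_jetIndex_add] at hT
  rw [finrank_multidegreeLE] at key
  simp only [Fin.prod_univ_two, degD, degH, degDH] at hP hQ hT key
  nlinarith

/-- Bezout's inequality for `D` and a partial derivative bounds `∑ μ(μ - 1)`, where `μ` are the
multiplicities of `D`, so that vanishing to order `μ - 1` on `Z` imposes too few conditions. -/
theorem exists_adjoint [CharZero K] {D : MvPolynomial (Fin 2) K} (hD : Irreducible D)
    (hdeg : ∀ i, degreeOf i D ≠ 0) (Z : Finset (Fin 2 → K)) :
    ∃ g ≠ 0, (∀ i, degreeOf i g < degreeOf i D) ∧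
      ∀ z ∈ Z, vanishingOrder z D ≤ vanishingOrder z g + 1 := by
  let μ (z : Fin 2 → K) : ℕ := (vanishingOrder z D).toNat
  have hμ (z : Fin 2 → K) : (μ z : ℕ∞) = vanishingOrder z D :=
    ENat.natCast_toNat (vanishingOrder_ne_top z hD.ne_zero)
  have hndvd : ¬ D ∣ pderiv 0 D := fun h ↦ by
    have := degreeOf_le_of_dvd (pderiv_ne_zero (hdeg 0)) h 0
    have := degreeOf_pderiv_self_le 0 D
    have := hdeg 0
    lia
  have hsum : ∑ z ∈ Z, μ z * (μ z - 1) ≤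
      degreeOf 0 D * degreeOf 1 (pderiv 0 D) + degreeOf 1 D * degreeOf 0 (pderiv 0 D) := by
    refine sum_mul_le_of_irreducible hD hndvd (fun z _ ↦ (hμ z).le) fun z _ ↦ ?_
    have := vanishingOrder_le_pderiv z 0 D
    rw [← hμ, ← tsub_le_iff_right] at this
    exact_mod_cast this
  have hcard : Nat.card (JetIndex Z fun z ↦ μ z - 1) < ∏ i, (degreeOf i D - 1 + 1) := by
    have hjet : Nat.card (JetIndex Z fun z ↦ μ z - 1) * 2 = ∑ z ∈ Z, μ z * (μ z - 1) := by
      rw [card_jetIndex_mul_two]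
      refine Finset.sum_congr rfl fun z _ ↦ ?_
      cases μ z <;> simp [mul_comm]
    simp only [Nat.sub_add_cancel (Nat.one_le_iff_ne_zero.mpr (hdeg _)), Fin.prod_univ_two]
    have h0 : degreeOf 0 (pderiv 0 D) + 1 ≤ degreeOf 0 D := by
      have := degreeOf_pderiv_self_le 0 D
      have := hdeg 0
      lia
    have := Nat.mul_le_mul_left (degreeOf 0 D) (degreeOf_pderiv_le 0 1 D)
    have := Nat.mul_le_mul_left (degreeOf 1 D) h0
    have := Nat.pos_of_ne_zero (hdeg 1)
    nlinarith
  obtain ⟨g, hg, hg0⟩ := exists_mem_linearSystem_ne_zero hcard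
  rw [mem_linearSystem] at hg
  refine ⟨g, hg0, fun i ↦ ?_, fun z hz ↦ ?_⟩
  · exact (hg.1 i).trans_lt (Nat.sub_one_lt (hdeg i))
  · rw [← hμ, ← tsub_le_iff_right]
    exact_mod_cast hg.2 z hz

end Bezout

section StableCurve

variable {K : Type*} [Field K] {Z : Finset (Fin 2 → K)} {m t : ℕ} {f : MvPolynomial (Fin 2) K}

/-- A curve `f = 0` of bidegree at most `(t + 1, t + 1)` having multiplicity at least `m + 1` at the
points of `Z`, such that no curve of bidegree at most `(t, t)` has multiplicity at least `m` at
these points. It exists when the least such degrees for `m` and `m + 1` are both `t + 1`. -/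
structure IsStableCurve (Z : Finset (Fin 2 → K)) (m t : ℕ) (f : MvPolynomial (Fin 2) K) :
    Prop where
  ne_zero : f ≠ 0
  degreeOf_le (i : Fin 2) : degreeOf i f ≤ t + 1
  le_vanishingOrder : ∀ z ∈ Z, ((m + 1 : ℕ) : ℕ∞) ≤ vanishingOrder z f
  exists_lt : ∀ g ≠ 0, (∀ i, degreeOf i g ≤ t) → ∃ z ∈ Z, vanishingOrder z g < m

namespace IsStableCurve

/-- Replacing the factor `P` of `f` by `Q` cannot yield a curve contradicting minimality. -/
theorem exists_add_lt (h : IsStableCurve Z m t f) {P Q : MvPolynomial (Fin 2) K} (hP : P ∣ f)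
    (hQ : Q ≠ 0) (hd : ∀ i, degreeOf i Q + degreeOf i f ≤ t + degreeOf i P) :
    ∃ z ∈ Z, vanishingOrder z Q + vanishingOrder z f < m + vanishingOrder z P := by
  obtain ⟨E, rfl⟩ := hP
  have hP0 := left_ne_zero_of_mul h.ne_zero
  have hE0 := right_ne_zero_of_mul h.ne_zero
  obtain ⟨z, hz, hlt⟩ := h.exists_lt (Q * E) (mul_ne_zero hQ hE0) fun i ↦ by
    have := hd i
    rw [degreeOf_mul_eq hP0 hE0] at this
    rw [degreeOf_mul_eq hQ hE0]
    lia
  refine ⟨z, hz, ?_⟩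
  rw [vanishingOrder_mul] at hlt ⊢
  rw [add_left_comm, add_comm (m : ℕ∞)]
  exact (ENat.add_lt_add_iff_left (vanishingOrder_ne_top z hP0)).mpr hlt

theorem exists_degreeOf_eq_zero [CharZero K] (h : IsStableCurve Z m t f)
    {D : MvPolynomial (Fin 2) K} (hD : Irreducible D) (hDf : D ∣ f) : ∃ i, degreeOf i D = 0 := by
  by_contra! hdeg
  obtain ⟨g, hg0, hgdeg, hgord⟩ := exists_adjoint hD hdeg Z
  obtain ⟨z, hz, hlt⟩ := h.exists_add_lt hDf hg0 fun i ↦ by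
    have := hgdeg i
    have := h.degreeOf_le i
    lia
  refine hlt.not_ge ?_
  calc m + vanishingOrder z D ≤ m + (vanishingOrder z g + 1) := by gcongr; exact hgord z hz
    _ = vanishingOrder z g + (m + 1 : ℕ) := by push_cast; ring
    _ ≤ vanishingOrder z g + vanishingOrder z f := by gcongr; exact h.le_vanishingOrder z hz

theorem exists_associated [CharZero K] [IsAlgClosed K] (h : IsStableCurve Z m t f)
    {D : MvPolynomial (Fin 2) K} (hD : Irreducible D) (hDf : D ∣ f) :
    ∃ i c, Associated (X i - C c) D := by
  obtain ⟨j, hj⟩ := h.exists_degreeOf_eq_zero hD hDf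
  obtain ⟨i, hij⟩ := exists_ne j
  refine ⟨i, exists_associated_X_sub_C hD fun k hki ↦ ?_⟩
  obtain rfl : k = j := by lia
  exact hj

theorem exists_X_sub_C_dvd_of_eval_eq_zero [CharZero K] [IsAlgClosed K]
    (h : IsStableCurve Z m t f) {E : MvPolynomial (Fin 2) K} (hE : E ∣ f) {z : Fin 2 → K}
    (hz : eval z E = 0) : ∃ i, X i - C (z i) ∣ E := by
  obtain ⟨D, hD, hDE, hDz⟩ :=
    exists_irreducible_dvd_of_eval_eq_zero (ne_zero_of_dvd_ne_zero h.ne_zero hE) hz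
  obtain ⟨i, c, hc⟩ := h.exists_associated hD (hDE.trans hE)
  have hzc : z i = c := by
    have := map_dvd (eval z) hc.symm.dvd
    rwa [hDz, zero_dvd_iff, map_sub, eval_X, eval_C, sub_eq_zero] at this
  exact ⟨i, hzc ▸ hc.dvd.trans hDE⟩

theorem exists_X_sub_C_dvd [CharZero K] [IsAlgClosed K] (h : IsStableCurve Z m t f)
    {i j : Fin 2} (hij : i ≠ j) {a : K} (ha : X i - C a ∣ f) : ∃ c, X j - C c ∣ f := by
  by_contra! hj
  have hdeg : degreeOf j f = 0 := degreeOf_eq_zero_of_irreducible_dvd fun D hD hDf ↦ by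
    obtain ⟨k, c, hc⟩ := h.exists_associated hD hDf
    obtain rfl : k = i := by
      by_contra hki
      obtain rfl : k = j := by lia
      exact hj c (hc.dvd.trans hDf)
    have := degreeOf_le_of_dvd (prime_X_sub_C k c).ne_zero hc.symm.dvd j
    rw [degreeOf_X_sub_C, if_neg hij.symm] at this
    exact Nat.le_zero.mp this
  obtain ⟨z, hz, hlt⟩ := h.exists_add_lt ha one_ne_zero fun k ↦ by
    rw [degreeOf_one, zero_add, degreeOf_X_sub_C]
    split_ifs with hk
    · exact hk ▸ h.degreeOf_le k
    · obtain rfl : k = j := by lia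
      exact hdeg.trans_le (Nat.zero_le _)
  refine hlt.not_ge ?_
  calc (m : ℕ∞) + vanishingOrder z (X i - C a) ≤ m + 1 := by
        gcongr; exact vanishingOrder_X_sub_C_le z i a
    _ ≤ vanishingOrder z f := by exact_mod_cast h.le_vanishingOrder z hz
    _ ≤ vanishingOrder z 1 + vanishingOrder z f := le_add_self

theorem mem_and_vanishingOrder_lt (h : IsStableCurve Z m t f) {z : Fin 2 → K}
    (hz : ∀ i, X i - C (z i) ∣ f) : z ∈ Z ∧ vanishingOrder z f < m + 2 := by
  obtain ⟨w, hw, hlt⟩ := h.exists_add_lt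
    ((isRelPrime_X_sub_C zero_ne_one (z 0) (z 1)).mul_dvd (hz 0) (hz 1)) one_ne_zero fun i ↦ by
      rw [degreeOf_one, zero_add, degreeOf_mul_eq (prime_X_sub_C _ _).ne_zero
        (prime_X_sub_C _ _).ne_zero, degreeOf_X_sub_C, degreeOf_X_sub_C]
      have := h.degreeOf_le i
      fin_cases i <;> simpa using this
  rw [vanishingOrder_one, zero_add, vanishingOrder_mul] at hlt
  have hle (i : Fin 2) := vanishingOrder_X_sub_C_le w i (z i)
  have hf := h.le_vanishingOrder w hw
  rw [Nat.cast_succ] at hf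
  have hwz : w = z := by
    funext i
    by_contra hi
    have h0 := vanishingOrder_X_sub_C_eq_zero hi
    refine hlt.not_ge (le_trans ?_ hf)
    gcongr
    fin_cases i
    · exact (congrArg (· + _) h0).trans_le ((zero_add _).trans_le (hle 1))
    · exact (congrArg (_ + ·) h0).trans_le ((add_zero _).trans_le (hle 0))
  subst hwz
  refine ⟨hw, hlt.trans_le ?_⟩
  gcongr
  exact (add_le_add (hle 0) (hle 1)).trans_eq one_add_one_eq_two

/-- Otherwise `f` vanishes at `z` only along the fibre `X i = z i`, which thus divides `f` at least
`m + 1` times. Then the point where this fibre meets a fibre `X j = c` contained in the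
curve has multiplicity at least `m + 2`. -/
theorem X_sub_C_dvd_of_X_sub_C_dvd [CharZero K] [IsAlgClosed K] (h : IsStableCurve Z m t f)
    {i j : Fin 2} (hij : i ≠ j) {z : Fin 2 → K} (hz : z ∈ Z) (hi : X i - C (z i) ∣ f) :
    X j - C (z j) ∣ f := by
  by_contra hj
  obtain ⟨r, E, hE, hfE⟩ :=
    WfDvdMonoid.max_power_factor h.ne_zero (prime_X_sub_C i (z i)).irreducible
  have hord (w : Fin 2 → K) : vanishingOrder w f =
      r * vanishingOrder w (X i - C (z i)) + vanishingOrder w E := by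
    rw [hfE, vanishingOrder_mul, vanishingOrder_pow]
  have hzE : vanishingOrder z E = 0 := vanishingOrder_eq_zero_iff.mpr fun hzE ↦ by
    have hEf : E ∣ f := Dvd.intro_left _ hfE.symm
    obtain ⟨k, hk⟩ := h.exists_X_sub_C_dvd_of_eval_eq_zero hEf hzE
    obtain rfl | rfl : k = i ∨ k = j := by lia
    exacts [hE hk, hj (hk.trans hEf)]
  have hr : ((m + 1 : ℕ) : ℕ∞) ≤ r :=
    calc ((m + 1 : ℕ) : ℕ∞) ≤ vanishingOrder z f := h.le_vanishingOrder z hz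
      _ = r * vanishingOrder z (X i - C (z i)) := by rw [hord, hzE, add_zero]
      _ ≤ r := mul_le_of_le_one_right' (vanishingOrder_X_sub_C_le z i _)
  obtain ⟨c, hc⟩ := h.exists_X_sub_C_dvd hij hi
  have hcE : X j - C c ∣ E :=
    (isRelPrime_X_sub_C hij.symm c (z i)).pow_right.dvd_of_dvd_mul_left (hfE ▸ hc)
  let w := Function.update z j c
  have hwi : w i = z i := Function.update_of_ne hij c z
  have hwj : w j = c := Function.update_self j c z
  have hw : vanishingOrder w f < m + 2 := (h.mem_and_vanishingOrder_lt fun k ↦ by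
    obtain rfl | rfl : k = i ∨ k = j := by lia
    exacts [hwi ▸ hi, hwj ▸ hc]).2
  have hwL : 1 ≤ vanishingOrder w (X i - C (z i)) := one_le_vanishingOrder_iff.mpr (by simp [hwi])
  have hwE : 1 ≤ vanishingOrder w E := one_le_vanishingOrder_iff.mpr <|
    zero_dvd_iff.mp <| by simpa [hwj] using map_dvd (eval w) hcE
  refine hw.not_ge ?_
  calc (m : ℕ∞) + 2 = (m + 1 : ℕ) * 1 + 1 := by push_cast; ring
    _ ≤ r * vanishingOrder w (X i - C (z i)) + vanishingOrder w E := by gcongr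
    _ = vanishingOrder w f := (hord w).symm

theorem mem_iff_forall_X_sub_C_dvd [CharZero K] [IsAlgClosed K] (h : IsStableCurve Z m t f)
    {z : Fin 2 → K} : z ∈ Z ↔ ∀ i, X i - C (z i) ∣ f := by
  refine ⟨fun hz j ↦ ?_, fun hz ↦ (h.mem_and_vanishingOrder_lt hz).1⟩
  have hfz : eval z f = 0 := one_le_vanishingOrder_iff.mp <|
    le_trans (by exact_mod_cast Nat.le_add_left 1 m) (h.le_vanishingOrder z hz)
  obtain ⟨i, hi⟩ := h.exists_X_sub_C_dvd_of_eval_eq_zero dvd_rfl hfz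
  obtain rfl | hij := eq_or_ne i j
  exacts [hi, h.X_sub_C_dvd_of_X_sub_C_dvd hij hz hi]

end IsStableCurve

end StableCurve

section FatPointDegree

variable {K : Type*} [Field K]

/-- The least `t` such that some nonzero form of bidegree `(t, t)`, viewed in the affine chart
`K²` of `ℙ¹ × ℙ¹`, has multiplicity at least `m` at the points of `Z`. -/
def fatPointDegree (Z : Finset (Fin 2 → K)) (m : ℕ) : ℕ :=
  sInf {t | ∃ f : MvPolynomial (Fin 2) K, f ≠ 0 ∧ (∀ i, degreeOf i f ≤ t) ∧
    ∀ z ∈ Z, (m : ℕ∞) ≤ vanishingOrder z f}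

theorem exists_degreeOf_le_fatPointDegree (Z : Finset (Fin 2 → K)) (m : ℕ) :
    ∃ f : MvPolynomial (Fin 2) K, f ≠ 0 ∧ (∀ i, degreeOf i f ≤ fatPointDegree Z m) ∧
      ∀ z ∈ Z, (m : ℕ∞) ≤ vanishingOrder z f := by
  refine Nat.sInf_mem (s := {t | ∃ f : MvPolynomial (Fin 2) K, f ≠ 0 ∧ (∀ i, degreeOf i f ≤ t) ∧
    ∀ z ∈ Z, (m : ℕ∞) ≤ vanishingOrder z f}) ⟨Nat.card (JetIndex Z fun _ ↦ m), ?_⟩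
  obtain ⟨f, hf, hf0⟩ := exists_mem_linearSystem_ne_zero
    (d := fun _ : Fin 2 ↦ Nat.card (JetIndex Z fun _ ↦ m)) (Z := Z) (k := fun _ ↦ m) (by
      rw [Fin.prod_univ_two]
      nlinarith)
  exact ⟨f, hf0, mem_linearSystem.mp hf⟩

theorem exists_isStableCurve {Z : Finset (Fin 2 → K)} {m t : ℕ} (hm : fatPointDegree Z m = t + 1)
    (hm' : fatPointDegree Z (m + 1) = t + 1) : ∃ f, IsStableCurve Z m t f := by
  obtain ⟨f, hf0, hfdeg, hford⟩ := exists_degreeOf_le_fatPointDegree Z (m + 1)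
  refine ⟨f, hf0, hm' ▸ hfdeg, hford, fun g hg0 hgdeg ↦ ?_⟩
  by_contra! hgord
  have : fatPointDegree Z m ≤ t := Nat.sInf_le ⟨g, hg0, hgdeg, hgord⟩
  lia

theorem eq_empty_of_fatPointDegree_eq_zero {Z : Finset (Fin 2 → K)} {m : ℕ}
    (h : fatPointDegree Z (m + 1) = 0) : Z = ∅ := by
  obtain ⟨f, hf0, hfdeg, hford⟩ := exists_degreeOf_le_fatPointDegree Z (m + 1)
  have hunit := isUnit_of_degreeOf_eq_zero hf0 fun i ↦ Nat.le_zero.mp (h ▸ hfdeg i)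
  refine Finset.eq_empty_of_forall_notMem fun z hz ↦ (hunit.map (eval z)).ne_zero ?_
  exact one_le_vanishingOrder_iff.mp <|
    le_trans (by exact_mod_cast Nat.le_add_left 1 m) (hford z hz)

theorem eq_piFinset_image_of_fatPointDegree_eq [DecidableEq K] [CharZero K] [IsAlgClosed K]
    {Z : Finset (Fin 2 → K)} {m : ℕ} (h : fatPointDegree Z m = fatPointDegree Z (m + 1)) :
    Z = Fintype.piFinset fun i ↦ Z.image (· i) := by
  refine Finset.Subset.antisymm (fun z hz ↦ Fintype.mem_piFinset.mpr fun i ↦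
    Finset.mem_image_of_mem _ hz) fun u hu ↦ ?_
  simp only [Fintype.mem_piFinset, Finset.mem_image] at hu
  cases ht : fatPointDegree Z (m + 1) with
  | zero => simp [eq_empty_of_fatPointDegree_eq_zero ht] at hu
  | succ t =>
    obtain ⟨f, hf⟩ := exists_isStableCurve (h.trans ht) ht
    refine hf.mem_iff_forall_X_sub_C_dvd.mpr fun i ↦ ?_
    obtain ⟨z, hz, hzu⟩ := hu i
    exact hzu ▸ hf.mem_iff_forall_X_sub_C_dvd.mp hz i

end FatPointDegree

section BiForm

variable {F : R4} {p q : ℕ}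

theorem IsBiForm.sum_mul_biWeight (hF : IsBiForm F p q) {s : Fin 2 ⊕ Fin 2 →₀ ℕ}
    (hs : s ∈ F.support) :
    ∑ j, s j * (biWeight j).1 = p ∧ ∑ j, s j * (biWeight j).2 = q := by
  have hw := hF (mem_support_iff.mp hs)
  rw [Finsupp.weight_apply, Finsupp.sum_fintype _ _ fun j ↦ zero_nsmul (biWeight j)] at hw
  simpa only [Prod.ext_iff, Prod.fst_sum, Prod.snd_sum, Prod.smul_fst, Prod.smul_snd,
    smul_eq_mul] using hw

theorem IsBiForm.eval_pow_biWeight_mul (hF : IsBiForm F p q) (a b : ℂ) (v : Fin 2 ⊕ Fin 2 → ℂ) :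
    eval (fun j ↦ a ^ (biWeight j).1 * b ^ (biWeight j).2 * v j) F = a ^ p * b ^ q * eval v F := by
  rw [eval_eq', eval_eq', Finset.mul_sum]
  refine Finset.sum_congr rfl fun s hs ↦ ?_
  obtain ⟨hp, hq⟩ := hF.sum_mul_biWeight hs
  simp only [mul_pow, Finset.prod_mul_distrib, ← pow_mul, Finset.prod_pow_eq_pow_sum,
    mul_comm (biWeight _).1, mul_comm (biWeight _).2, hp, hq]
  ring

end BiForm

section Chart

/-- The `k`-th homogeneous coordinate on the `i`-th factor of `ℙ¹ × ℙ¹`. -/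
def projVar (i k : Fin 2) : R4 := X (![Sum.inl k, Sum.inr k] i)

/-- The linear form on the `i`-th factor of `ℙ¹ × ℙ¹` whose zero `[1 : e]` is the point at infinity
of the affine chart. -/
def chartForm (e : ℂ) (i : Fin 2) : R4 := projVar i 1 - C e * projVar i 0

/-- Homogeneous coordinates on the two factors of a point of `ℙ¹ × ℙ¹`. -/
def projCoord (P : ProjLine × ProjLine) (i : Fin 2) : Fin 2 → ℂ := ![P.1.rep, P.2.rep] i

/-- `P` belongs to the affine chart of `ℙ¹ × ℙ¹` where neither factor is `[1 : e]`. -/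
def InChart (e : ℂ) (P : ProjLine × ProjLine) : Prop :=
  ∀ i, projCoord P i 1 - e * projCoord P i 0 ≠ 0

/-- The affine coordinates `x₀ / (x₁ - e x₀)` and `y₀ / (y₁ - e y₀)` of a point of `ℙ¹ × ℙ¹`,
with junk values outside of the chart `InChart e`. -/
def chart (e : ℂ) (P : ProjLine × ProjLine) (i : Fin 2) : ℂ :=
  projCoord P i 0 / (projCoord P i 1 - e * projCoord P i 0)

theorem projCoord_ne_zero (P : ProjLine × ProjLine) (i : Fin 2) : projCoord P i ≠ 0 := by
  fin_cases i
  exacts [P.1.rep_nonzero, P.2.rep_nonzero]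

theorem eq_of_forall_projCoord_eq_smul {P Q : ProjLine × ProjLine}
    (h : ∀ i, ∃ a : ℂ, a • projCoord Q i = projCoord P i) : P = Q := by
  refine Prod.ext ?_ ?_
  · rw [← P.1.mk_rep, ← Q.1.mk_rep, Projectivization.mk_eq_mk_iff']
    exact h 0
  · rw [← P.2.mk_rep, ← Q.2.mk_rep, Projectivization.mk_eq_mk_iff']
    exact h 1

theorem chart_congr (e : ℂ) {P Q : ProjLine × ProjLine} {i : Fin 2}
    (h : projCoord P i = projCoord Q i) : chart e P i = chart e Q i := by
  rw [chart, chart, h]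

theorem exists_forall_inChart (Z : Finset (ProjLine × ProjLine)) : ∃ e, ∀ P ∈ Z, InChart e P := by
  classical
  obtain ⟨e, he⟩ := Infinite.exists_notMem_finset
    ((Z ×ˢ Finset.univ).image fun x ↦ projCoord x.1 x.2 1 / projCoord x.1 x.2 0)
  refine ⟨e, fun P hP i h ↦ ?_⟩
  rw [sub_eq_zero] at h
  by_cases h0 : projCoord P i 0 = 0
  · refine projCoord_ne_zero P i (funext (Fin.forall_fin_two.mpr ⟨h0, ?_⟩))
    rw [h, h0, mul_zero, Pi.zero_apply]
  · exact he <| Finset.mem_image.mpr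
      ⟨(P, i), Finset.mk_mem_product hP (Finset.mem_univ i), (div_eq_iff h0).mpr h⟩

theorem chart_injOn (e : ℂ) : Set.InjOn (chart e) {P | InChart e P} := by
  refine fun P hP Q hQ h ↦ eq_of_forall_projCoord_eq_smul fun i ↦ ?_
  have hi := congrFun h i
  rw [chart, chart, div_eq_div_iff (hP i) (hQ i)] at hi
  refine ⟨(projCoord P i 1 - e * projCoord P i 0) / (projCoord Q i 1 - e * projCoord Q i 0), ?_⟩
  refine funext (Fin.forall_fin_two.mpr ⟨?_, ?_⟩)
  all_goals
    rw [Pi.smul_apply, smul_eq_mul, div_mul_eq_mul_div, div_eq_iff (hQ i)]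
  · linear_combination -hi
  · linear_combination -e * hi

theorem pointIdeal_eq_span_range (P : ProjLine × ProjLine) :
    pointIdeal P = Ideal.span (Set.range fun i ↦
      C (projCoord P i 1) * projVar i 0 - C (projCoord P i 0) * projVar i 1) := by
  rw [pointIdeal]
  congr 1
  ext F
  simp [Fin.exists_fin_two, projCoord, projVar, eq_comm]

theorem pointIdeal_eq_span_chart {e : ℂ} {P : ProjLine × ProjLine} (hP : InChart e P) :
    pointIdeal P = Ideal.span (Set.range fun i ↦
      projVar i 0 - C (chart e P i) * chartForm e i) := by
  have hassoc (i : Fin 2) : Associated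
      (C (projCoord P i 1) * projVar i 0 - C (projCoord P i 0) * projVar i 1)
      (projVar i 0 - C (chart e P i) * chartForm e i) := by
    have hunit : IsUnit (C (projCoord P i 1 - e * projCoord P i 0) : R4) :=
      (isUnit_iff_ne_zero.mpr (hP i)).map C
    have hmul : C (projCoord P i 1 - e * projCoord P i 0) * C (chart e P i) =
        (C (projCoord P i 0) : R4) := by
      rw [← C_mul, chart, mul_div_cancel₀ _ (hP i)]
    refine Associated.symm ⟨hunit.unit, ?_⟩
    rw [IsUnit.unit_spec, mul_comm, mul_sub, ← mul_assoc, hmul, chartForm, C_sub, C_mul]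
    ring
  rw [pointIdeal_eq_span_range, Ideal.span, Ideal.span, Submodule.span_range_eq_iSup,
    Submodule.span_range_eq_iSup]
  exact iSup_congr fun i ↦ Ideal.span_singleton_eq_span_singleton.mpr (hassoc i)

end Chart

section Dehomogenize

/-- The coordinates on `ℙ¹ × ℙ¹` as functions on the affine chart `InChart e`, normalized such that
the linear forms `chartForm e i` equal `1`. -/
def dehomogenizeVar (e : ℂ) : Fin 2 ⊕ Fin 2 → MvPolynomial (Fin 2) ℂ :=
  Sum.elim ![X 0, 1 + C e * X 0] ![X 1, 1 + C e * X 1]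

/-- Restriction of forms on `ℙ¹ × ℙ¹` to the affine chart `InChart e`, with the linear forms
`chartForm e i` set equal to `1`. -/
def dehomogenize (e : ℂ) : R4 →ₐ[ℂ] MvPolynomial (Fin 2) ℂ :=
  aeval (dehomogenizeVar e)

theorem dehomogenize_projVar_zero (e : ℂ) (i : Fin 2) : dehomogenize e (projVar i 0) = X i := by
  fin_cases i <;> simp [dehomogenize, dehomogenizeVar, projVar]

theorem dehomogenize_projVar_one (e : ℂ) (i : Fin 2) :
    dehomogenize e (projVar i 1) = 1 + C e * X i := by
  fin_cases i <;> simp [dehomogenize, dehomogenizeVar, projVar]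

theorem dehomogenize_C (e c : ℂ) : dehomogenize e (C c) = C c :=
  (dehomogenize e).commutes c

theorem dehomogenize_chartForm (e : ℂ) (i : Fin 2) : dehomogenize e (chartForm e i) = 1 := by
  rw [chartForm, map_sub, map_mul, dehomogenize_projVar_zero, dehomogenize_projVar_one,
    dehomogenize_C, add_sub_cancel_right]

theorem map_dehomogenize_pointIdeal_le {e : ℂ} {P : ProjLine × ProjLine} (hP : InChart e P) :
    (pointIdeal P).map (dehomogenize e) ≤ affinePointIdeal (chart e P) := by
  rw [pointIdeal_eq_span_chart hP, Ideal.map_span, Ideal.span_le]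
  rintro _ ⟨_, ⟨i, rfl⟩, rfl⟩
  rw [map_sub, map_mul, dehomogenize_projVar_zero, dehomogenize_chartForm, dehomogenize_C, mul_one]
  exact Ideal.subset_span ⟨i, rfl⟩

theorem le_vanishingOrder_dehomogenize {e : ℂ} {P : ProjLine × ProjLine} (hP : InChart e P)
    {m : ℕ} {F : R4} (hF : F ∈ pointIdeal P ^ m) :
    (m : ℕ∞) ≤ vanishingOrder (chart e P) (dehomogenize e F) := by
  have hmem := Ideal.mem_map_of_mem (dehomogenize e) hF
  rw [Ideal.map_pow] at hmem
  exact le_vanishingOrder_of_mem_pow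
    (Ideal.pow_right_mono (map_dehomogenize_pointIdeal_le hP) m hmem)

theorem degreeOf_dehomogenizeVar_le (e : ℂ) (i : Fin 2) (j : Fin 2 ⊕ Fin 2) :
    degreeOf i (dehomogenizeVar e j) ≤ ![(biWeight j).1, (biWeight j).2] i := by
  have hlin (k : Fin 2) : degreeOf i (1 + C e * X k : MvPolynomial (Fin 2) ℂ) ≤
      if i = k then 1 else 0 := by
    refine (degreeOf_add_le _ _ _).trans (max_le ((degreeOf_one i).trans_le (Nat.zero_le _)) ?_)
    exact (degreeOf_C_mul_le _ _ _).trans_eq (degreeOf_X i k)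
  have h0 := hlin 0
  have h1 := hlin 1
  rcases j with k | k <;> fin_cases k <;> fin_cases i <;>
    simp_all [dehomogenizeVar, biWeight, degreeOf_X]

theorem degreeOf_dehomogenize_le (e : ℂ) {F : R4} {d : Fin 2 → ℕ} (hF : IsBiForm F (d 0) (d 1))
    (i : Fin 2) : degreeOf i (dehomogenize e F) ≤ d i := by
  refine degreeOf_aeval_le i _ fun s hs ↦ ?_
  rw [Finsupp.sum_fintype _ _ fun _ ↦ zero_mul _]
  refine (Finset.sum_le_sum fun j _ ↦
    Nat.mul_le_mul_left (s j) (degreeOf_dehomogenizeVar_le e i j)).trans ?_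
  obtain ⟨hp, hq⟩ := hF.sum_mul_biWeight hs
  fin_cases i
  exacts [hp.le, hq.le]

theorem eval_dehomogenize (e : ℂ) (z : Fin 2 → ℂ) (F : R4) :
    eval z (dehomogenize e F) = eval (fun j ↦ eval z (dehomogenizeVar e j)) F := by
  have hC : (eval z).comp C = RingHom.id ℂ := RingHom.ext fun c ↦ eval_C c
  rw [dehomogenize, map_aeval, algebraMap_eq, hC]
  rfl

theorem IsBiForm.eval_eq_prod_mul_eval_dehomogenize {F : R4} {d : Fin 2 → ℕ}
    (hF : IsBiForm F (d 0) (d 1)) {e : ℂ} {v : Fin 2 ⊕ Fin 2 → ℂ}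
    (hv : ∀ i, eval v (chartForm e i) ≠ 0) :
    eval v F = (∏ i, eval v (chartForm e i) ^ d i) *
      eval (fun i ↦ eval v (projVar i 0) / eval v (chartForm e i)) (dehomogenize e F) := by
  rw [eval_dehomogenize, Fin.prod_univ_two, ← hF.eval_pow_biWeight_mul]
  have hzero (i : Fin 2) : eval v (projVar i 0) =
      eval v (chartForm e i) * (eval v (projVar i 0) / eval v (chartForm e i)) :=
    (mul_div_cancel₀ _ (hv i)).symm
  have hone (i : Fin 2) : eval v (projVar i 1) = eval v (chartForm e i) *
      (1 + e * (eval v (projVar i 0) / eval v (chartForm e i))) := by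
    rw [mul_add, mul_left_comm, ← hzero, chartForm]
    simp
  refine congrArg (eval · F) (funext fun j ↦ ?_)
  rcases j with k | k <;> fin_cases k
  · simpa [projVar, dehomogenizeVar, biWeight] using hzero 0
  · simpa [projVar, dehomogenizeVar, biWeight] using hone 0
  · simpa [projVar, dehomogenizeVar, biWeight] using hzero 1
  · simpa [projVar, dehomogenizeVar, biWeight] using hone 1

theorem eq_zero_of_dehomogenize_eq_zero {e : ℂ} {F : R4} {d : Fin 2 → ℕ}
    (hF : IsBiForm F (d 0) (d 1))
    (h : dehomogenize e F = 0) : F = 0 := by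
  have hform (i : Fin 2) : chartForm e i ≠ 0 := fun h0 ↦ by
    simpa [h0] using dehomogenize_chartForm e i
  have hmul : (∏ i, chartForm e i) * F = 0 := MvPolynomial.funext fun v ↦ by
    rw [map_mul, map_prod, map_zero]
    by_cases hv : ∀ i, eval v (chartForm e i) ≠ 0
    · rw [hF.eval_eq_prod_mul_eval_dehomogenize hv, h, map_zero, mul_zero, mul_zero]
    · push Not at hv
      obtain ⟨i, hi⟩ := hv
      rw [Finset.prod_eq_zero (Finset.mem_univ i) hi, zero_mul]
  exact (mul_eq_zero.mp hmul).resolve_left (Finset.prod_ne_zero_iff.mpr fun i _ ↦ hform i)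

end Dehomogenize

section Homogenize

/-- The form of bidegree `d` restricting to `f` on the affine chart `InChart e`, read off from the
Taylor expansion of `f` at `z`. -/
def homogenizeAt (e : ℂ) (z : Fin 2 → ℂ) (d : Fin 2 → ℕ) (f : MvPolynomial (Fin 2) ℂ) : R4 :=
  ∑ s ∈ (polyTranslate z f).support, C (coeff s (polyTranslate z f)) *
    ∏ i, (projVar i 0 - C (z i) * chartForm e i) ^ s i * chartForm e i ^ (d i - s i)

variable {e : ℂ} {z : Fin 2 → ℂ} {d : Fin 2 → ℕ} {f : MvPolynomial (Fin 2) ℂ}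

theorem dehomogenize_homogenizeAt (e : ℂ) (z : Fin 2 → ℂ) (d : Fin 2 → ℕ)
    (f : MvPolynomial (Fin 2) ℂ) : dehomogenize e (homogenizeAt e z d f) = f := by
  rw [← (polyTranslate z).symm_apply_apply f]
  set g := polyTranslate z f
  conv_rhs => rw [g.as_sum, map_sum]
  rw [homogenizeAt, map_sum, (polyTranslate z).apply_symm_apply]
  refine Finset.sum_congr rfl fun s _ ↦ ?_
  simp only [map_mul, map_prod, map_pow, map_sub, dehomogenize_projVar_zero,
    dehomogenize_chartForm, dehomogenize_C, mul_one, one_pow]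
  rw [polyTranslate_symm, monomial_eq, map_mul, polyTranslate_C, Finsupp.prod_fintype _ _ (by simp),
    map_prod]
  simp [sub_eq_add_neg]

theorem isBiForm_homogenizeAt (e : ℂ) (z : Fin 2 → ℂ) (hf : ∀ i, degreeOf i f ≤ d i) :
    IsBiForm (homogenizeAt e z d f) (d 0) (d 1) := by
  let w : Fin 2 → ℕ × ℕ := ![(1, 0), (0, 1)]
  have hvar (i k : Fin 2) : IsWeightedHomogeneous biWeight (projVar i k) (w i) := by
    fin_cases i <;> exact isWeightedHomogeneous_X ℂ biWeight _
  have hform (i : Fin 2) : IsWeightedHomogeneous biWeight (chartForm e i) (w i) :=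
    (hvar i 1).sub ((hvar i 0).C_mul e)
  refine (weightedHomogeneousSubmodule ℂ biWeight (d 0, d 1)).sum_mem fun s hs ↦ ?_
  have hsd (i : Fin 2) : s i ≤ d i :=
    (monomial_le_degreeOf i hs).trans ((degreeOf_polyTranslate z i f).trans_le (hf i))
  refine IsWeightedHomogeneous.C_mul ?_ _
  have hw : ∑ i, (s i • w i + (d i - s i) • w i) = (d 0, d 1) := by
    simp only [← add_smul, Nat.add_sub_cancel' (hsd _), Fin.sum_univ_two]
    simp [w, -nsmul_eq_mul]
  rw [← hw]
  exact IsWeightedHomogeneous.prod Finset.univ _ _ fun i _ ↦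
    (((hvar i 0).sub ((hform i).C_mul (z i))).pow (s i)).mul ((hform i).pow (d i - s i))

theorem homogenizeAt_eq_homogenizeAt (e : ℂ) (z w : Fin 2 → ℂ) (hf : ∀ i, degreeOf i f ≤ d i) :
    homogenizeAt e z d f = homogenizeAt e w d f := by
  refine sub_eq_zero.mp (eq_zero_of_dehomogenize_eq_zero (e := e)
    ((isBiForm_homogenizeAt e z hf).sub (isBiForm_homogenizeAt e w hf)) ?_)
  rw [map_sub, dehomogenize_homogenizeAt, dehomogenize_homogenizeAt, sub_self]

theorem homogenizeAt_chart_mem {P : ProjLine × ProjLine} (hP : InChart e P) {m : ℕ}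
    (h : (m : ℕ∞) ≤ vanishingOrder (chart e P) f) (d : Fin 2 → ℕ) :
    homogenizeAt e (chart e P) d f ∈ pointIdeal P ^ m := by
  refine Ideal.sum_mem _ fun s hs ↦ Ideal.mul_mem_left _ _ ?_
  have hms : m ≤ ∑ i, s i := by
    by_contra! hlt
    rw [← Finsupp.degree_eq_sum] at hlt
    exact mem_support_iff.mp hs (natCast_le_vanishingOrder_iff.mp h s hlt)
  rw [Finset.prod_mul_distrib]
  refine Ideal.mul_mem_right _ _ (Ideal.pow_le_pow_right hms ?_)
  rw [← Finset.prod_pow_eq_pow_sum]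
  refine Ideal.prod_mem_prod fun i _ ↦ Ideal.pow_mem_pow ?_ _
  rw [pointIdeal_eq_span_chart hP]
  exact Ideal.subset_span ⟨i, rfl⟩

theorem alphaStar_symbPow_eq_fatPointDegree {Z : Finset (ProjLine × ProjLine)}
    (hZ : ∀ P ∈ Z, InChart e P) (m : ℕ) :
    alphaStar (symbPow Z m) = fatPointDegree (Z.image (chart e)) m := by
  rw [alphaStar, fatPointDegree]
  congr 1
  ext t
  simp only [symbPow, Ideal.mem_iInf, Finset.forall_mem_image]
  constructor
  · rintro ⟨F, hF, hF0, hFt⟩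
    exact ⟨dehomogenize e F, mt (eq_zero_of_dehomogenize_eq_zero (d := fun _ ↦ t) hFt) hF0,
      degreeOf_dehomogenize_le e (d := fun _ ↦ t) hFt,
      fun P hP ↦ le_vanishingOrder_dehomogenize (hZ P hP) (hF P hP)⟩
  · rintro ⟨f, hf0, hft, hf⟩
    refine ⟨homogenizeAt e 0 (fun _ ↦ t) f, fun P hP ↦ ?_, fun h ↦ hf0 ?_,
      isBiForm_homogenizeAt e 0 hft⟩
    · rw [homogenizeAt_eq_homogenizeAt e 0 (chart e P) hft]
      exact homogenizeAt_chart_mem (hZ P hP) (hf hP) _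
    · rw [← dehomogenize_homogenizeAt e 0 (fun _ ↦ t) f, h, map_zero]

end Homogenize

/-- If for the radical ideal `I` of a finite set `Z` of distinct points of `ℙ¹ × ℙ¹` one has
`α*(I^{(m)}) = α*(I^{(m+1)})` for some `m ≥ 1`, then `Z` is a grid: there are finite sets
`Z_V, Z_H ⊂ ℙ¹` with `Z = Z_V × Z_H`. -/
theorem grid_of_alphaStar_stable (Z : Finset (ProjLine × ProjLine)) (m : ℕ) (hm : 1 ≤ m)
    (h : alphaStar (symbPow Z m) = alphaStar (symbPow Z (m + 1))) :
    ∃ ZV ZH : Finset ProjLine, Z = ZV ×ˢ ZH := by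
  classical
  obtain ⟨e, he⟩ := exists_forall_inChart (Z.image Prod.fst ×ˢ Z.image Prod.snd)
  have hsub : Z ⊆ Z.image Prod.fst ×ˢ Z.image Prod.snd := Finset.subset_product
  have hZ (P) (hP : P ∈ Z) : InChart e P := he P (hsub hP)
  rw [alphaStar_symbPow_eq_fatPointDegree hZ, alphaStar_symbPow_eq_fatPointDegree hZ] at h
  refine ⟨Z.image Prod.fst, Z.image Prod.snd, hsub.antisymm fun S hS ↦ ?_⟩
  have hSe : chart e S ∈ Z.image (chart e) := by
    rw [Finset.mem_product, Finset.mem_image, Finset.mem_image] at hS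
    obtain ⟨⟨P, hP, hPS⟩, Q, hQ, hQS⟩ := hS
    rw [eq_piFinset_image_of_fatPointDegree_eq h, Fintype.mem_piFinset, Fin.forall_fin_two]
    simp only [Finset.mem_image, exists_exists_and_eq_and]
    exact ⟨⟨P, hP, chart_congr e (congrArg Projectivization.rep hPS)⟩,
      Q, hQ, chart_congr e (congrArg Projectivization.rep hQS)⟩
  obtain ⟨T, hT, hTS⟩ := Finset.mem_image.mp hSe
  exact chart_injOn e (hZ T hT) (he S hS) hTS ▸ hT
end
end
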